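/- Let p ∈ [1, 3/2) and let (u, w, b, Π) be a smooth solution of the stationary magneto-micropolar equations on ℝ³ with u, b, w bounded on ℝ³. Then there exists a constant C > 0 (depending only on p and on ‖u‖_{L^∞}, ‖b‖_{L^∞}, ‖w‖_{L^∞}) such that for all R > 1: ∫_{B_R} (|∇u|² + |∇b|² + |∇w|²) dx ≤ C (R^{1 − 3/p} + R^{2 − 3/p}) (‖u‖_{L^p(B_{2R})} + ‖b‖_{L^p(B_{2R})} + ‖w‖_{L^p(B_{2R})}). -/

import Mathlib

open MeasureTheory Real Filter Metric
open scoped Topology ENNReal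

noncomputable section

/-- Three-dimensional Euclidean space. -/
abbrev E3 := EuclideanSpace ℝ (Fin 3)

/-- Partial derivative in the `i`-th coordinate direction. -/
def pd (i : Fin 3) (f : E3 → ℝ) (x : E3) : ℝ := fderiv ℝ f x (EuclideanSpace.single i 1)

/-- Laplacian of a scalar function. -/
def lap (f : E3 → ℝ) (x : E3) : ℝ := ∑ i, pd i (fun y => pd i f y) x

/-- Divergence of a vector field. -/
def vdiv (v : E3 → E3) (x : E3) : ℝ := ∑ i, pd i (fun y => v y i) x

/-- Curl of a vector field on ℝ³. -/
def curl3 (v : E3 → E3) (x : E3) : Fin 3 → ℝ :=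
  ![pd 1 (fun y => v y 2) x - pd 2 (fun y => v y 1) x,
    pd 2 (fun y => v y 0) x - pd 0 (fun y => v y 2) x,
    pd 0 (fun y => v y 1) x - pd 1 (fun y => v y 0) x]

/-- Squared norm of the full gradient of a vector field: |∇v|² = Σᵢⱼ (∂ᵢ vⱼ)². -/
def gradSq (v : E3 → E3) (x : E3) : ℝ := ∑ j, ∑ i, (pd i (fun y => v y j) x) ^ 2

/-- The open ball of radius `r` centered at the origin. -/
def ball3 (r : ℝ) : Set E3 := Metric.ball (0 : E3) r

/-- `(u, w, b, Π)` is a smooth solution of the stationary magneto-micropolar equations on ℝ³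
(with all physical constants set to 1):
−Δu + (u·∇)u + ∇Π = ∇×w + (b·∇)b; −Δw + (u·∇)w = ∇(div w) + ∇×u − 2w;
−Δb + (u·∇)b = (b·∇)u; div u = 0, div b = 0. -/
structure IsMMPSolution (u w b : E3 → E3) (P : E3 → ℝ) : Prop where
  smooth_u : ContDiff ℝ (⊤ : ℕ∞) u
  smooth_w : ContDiff ℝ (⊤ : ℕ∞) w
  smooth_b : ContDiff ℝ (⊤ : ℕ∞) b
  smooth_P : ContDiff ℝ (⊤ : ℕ∞) P
  eq_u : ∀ x : E3, ∀ j : Fin 3,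
    -(lap (fun y => u y j) x) + (∑ i, u x i * pd i (fun y => u y j) x) + pd j P x
      = curl3 w x j + ∑ i, b x i * pd i (fun y => b y j) x
  eq_w : ∀ x : E3, ∀ j : Fin 3,
    -(lap (fun y => w y j) x) + (∑ i, u x i * pd i (fun y => w y j) x)
      = pd j (fun y => vdiv w y) x + curl3 u x j - 2 * w x j
  eq_b : ∀ x : E3, ∀ j : Fin 3,
    -(lap (fun y => b y j) x) + (∑ i, u x i * pd i (fun y => b y j) x)
      = ∑ i, b x i * pd i (fun y => u y j) x
  div_u : ∀ x : E3, vdiv u x = 0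
  div_b : ∀ x : E3, vdiv b x = 0

/-- The `Lᵖ` norm of a vector field over a set `S` (for `p` a positive real). -/
def lpnorm (p : ℝ) (v : E3 → E3) (S : Set E3) : ℝ := (∫ x in S, ‖v x‖ ^ p) ^ (1 / p)

/-- Smooth real-valued functions. -/
local notation "Smooth" => ContDiff ℝ ((⊤ : ℕ∞) : WithTop ℕ∞)

section Calculus

@[fun_prop]
lemma contDiff_pd {f : E3 → ℝ} (hf : Smooth f) (i : Fin 3) : Smooth (pd i f) := by
  unfold pd
  have h : ContDiff ℝ ((⊤ : ℕ∞) : WithTop ℕ∞) (fderiv ℝ f) :=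
    hf.fderiv_right (m := ((⊤ : ℕ∞) : WithTop ℕ∞)) (by exact_mod_cast le_refl _)
  exact h.clm_apply contDiff_const

lemma lap_eq (f : E3 → ℝ) : lap f = fun x => ∑ i, pd i (pd i f) x := rfl

@[fun_prop]
lemma contDiff_lap {f : E3 → ℝ} (hf : Smooth f) : Smooth (lap f) := by
  rw [lap_eq]
  fun_prop

lemma differentiableAt_of_smooth {f : E3 → ℝ} (hf : Smooth f) (x : E3) :
    DifferentiableAt ℝ f x :=
  (hf.differentiable (by simp)) x

lemma pd_mul {f g : E3 → ℝ} (hf : Smooth f) (hg : Smooth g) (i : Fin 3) :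
    pd i (fun y => f y * g y) = fun x => f x * pd i g x + pd i f x * g x := by
  funext x
  unfold pd
  rw [fderiv_fun_mul (differentiableAt_of_smooth hf x) (differentiableAt_of_smooth hg x)]
  simp [mul_comm]

lemma pd_add {f g : E3 → ℝ} (hf : Smooth f) (hg : Smooth g) (i : Fin 3) :
    pd i (fun y => f y + g y) = fun x => pd i f x + pd i g x := by
  funext x
  unfold pd
  rw [fderiv_fun_add (differentiableAt_of_smooth hf x) (differentiableAt_of_smooth hg x)]
  simp

lemma pd_sub {f g : E3 → ℝ} (hf : Smooth f) (hg : Smooth g) (i : Fin 3) :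
    pd i (fun y => f y - g y) = fun x => pd i f x - pd i g x := by
  funext x
  unfold pd
  rw [fderiv_fun_sub (differentiableAt_of_smooth hf x) (differentiableAt_of_smooth hg x)]
  simp

lemma pd_const_mul {f : E3 → ℝ} (hf : Smooth f) (c : ℝ) (i : Fin 3) :
    pd i (fun y => c * f y) = fun x => c * pd i f x := by
  funext x
  unfold pd
  rw [fderiv_const_mul (differentiableAt_of_smooth hf x)]
  simp

lemma pd_sum {ι : Type*} (s : Finset ι) {f : ι → E3 → ℝ} (hf : ∀ k, Smooth (f k)) (i : Fin 3) :
    pd i (fun y => ∑ k ∈ s, f k y) = fun x => ∑ k ∈ s, pd i (f k) x := by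
  funext x
  unfold pd
  rw [fderiv_fun_sum fun k _ => differentiableAt_of_smooth (hf k) x]
  simp

lemma pd_comm {f : E3 → ℝ} (hf : Smooth f) (i j : Fin 3) :
    pd i (pd j f) = pd j (pd i f) := by
  funext x
  have h1 : ∀ k, ∀ v : E3, fderiv ℝ (fun y => fderiv ℝ f y (EuclideanSpace.single k 1)) x v
      = fderiv ℝ (fderiv ℝ f) x v (EuclideanSpace.single k 1) := by
    intro k v
    have hd : DifferentiableAt ℝ (fderiv ℝ f) x :=
      (hf.fderiv_right (m := ((⊤ : ℕ∞) : WithTop ℕ∞)) (by exact_mod_cast le_refl _)).differentiable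
        (by simp) x
    rw [fderiv_clm_apply hd (by fun_prop)]
    simp
  have hs : IsSymmSndFDerivAt ℝ f x := by
    apply ContDiffAt.isSymmSndFDerivAt hf.contDiffAt
    rw [minSmoothness_of_isRCLikeNormedField]
    exact WithTop.coe_le_coe.2 le_top
  change fderiv ℝ (fun y => fderiv ℝ f y (EuclideanSpace.single j 1)) x _
    = fderiv ℝ (fun y => fderiv ℝ f y (EuclideanSpace.single i 1)) x _
  rw [h1, h1]
  exact hs _ _

lemma lap_add {f g : E3 → ℝ} (hf : Smooth f) (hg : Smooth g) :
    lap (fun y => f y + g y) = fun x => lap f x + lap g x := by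
  funext x
  simp only [lap_eq, pd_add hf hg, pd_add (contDiff_pd hf _) (contDiff_pd hg _),
    Finset.sum_add_distrib]

lemma lap_mul {f g : E3 → ℝ} (hf : Smooth f) (hg : Smooth g) :
    lap (fun y => f y * g y)
      = fun x => f x * lap g x + 2 * (∑ i, pd i f x * pd i g x) + lap f x * g x := by
  funext x
  simp only [lap_eq]
  have h : ∀ i, pd i (pd i fun y => f y * g y) x
      = f x * pd i (pd i g) x + 2 * (pd i f x * pd i g x) + pd i (pd i f) x * g x := by
    intro i
    rw [pd_mul hf hg, pd_add (by fun_prop) (by fun_prop), pd_mul hf (by fun_prop),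
      pd_mul (by fun_prop) hg]
    ring
  simp only [h, Finset.sum_add_distrib, Finset.mul_sum, Finset.sum_mul]

lemma pd_lap_comm {f : E3 → ℝ} (hf : Smooth f) (i : Fin 3) : pd i (lap f) = lap (pd i f) := by
  rw [lap_eq, pd_sum _ (fun k => by fun_prop), lap_eq]
  funext x
  refine Finset.sum_congr rfl fun k _ => ?_
  rw [pd_comm (contDiff_pd hf k), pd_comm hf]

lemma pd_eq_zero_of_eventuallyEq {f : E3 → ℝ} {c : ℝ} {x : E3} (h : f =ᶠ[𝓝 x] fun _ => c)
    (i : Fin 3) : pd i f x = 0 := by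
  unfold pd
  rw [h.fderiv_eq]
  simp

lemma tsupport_pd_subset (f : E3 → ℝ) (i : Fin 3) : tsupport (pd i f) ⊆ tsupport f :=
  tsupport_fderiv_apply_subset ℝ _

lemma hasCompactSupport_pd {f : E3 → ℝ} (hf : HasCompactSupport f) (i : Fin 3) :
    HasCompactSupport (pd i f) :=
  hf.fderiv_apply ℝ _

lemma hasCompactSupport_lap {f : E3 → ℝ} (hf : HasCompactSupport f) :
    HasCompactSupport (lap f) := by
  rw [lap_eq]
  simp only [Fin.sum_univ_three]
  have h := fun i => hasCompactSupport_pd (hasCompactSupport_pd hf i) i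
  exact ((h 0).add (h 1)).add (h 2)

lemma pd_comp_smul {f : E3 → ℝ} (hf : Smooth f) (c : ℝ) (i : Fin 3) :
    pd i (fun y => f (c • y)) = fun x => c * pd i f (c • x) := by
  funext x
  unfold pd
  have h : HasFDerivAt (fun y : E3 => c • y) (c • ContinuousLinearMap.id ℝ E3) x :=
    (hasFDerivAt_id x).const_smul c
  have h2 := (differentiableAt_of_smooth hf (c • x)).hasFDerivAt.comp x h
  have h3 : fderiv ℝ (fun y => f (c • y)) x = _ := h2.fderiv
  rw [h3]
  simp

lemma lap_comp_smul {f : E3 → ℝ} (hf : Smooth f) (c : ℝ) :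
    lap (fun y => f (c • y)) = fun x => c ^ 2 * lap f (c • x) := by
  funext x
  simp only [lap_eq]
  have h : ∀ i, pd i (pd i fun y => f (c • y)) x = c ^ 2 * pd i (pd i f) (c • x) := by
    intro i
    rw [pd_comp_smul hf, pd_const_mul (f := fun y => pd i f (c • y)) (by fun_prop),
      pd_comp_smul (by fun_prop)]
    ring
  simp only [h, Finset.mul_sum]

lemma integrable_of_smooth {f : E3 → ℝ} (hf : Smooth f) (h : HasCompactSupport f) :
    Integrable f :=
  hf.continuous.integrable_of_hasCompactSupport h

/-- Integration by parts against a compactly supported function. -/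
lemma integral_mul_pd {f g : E3 → ℝ} (hf : Smooth f) (hg : Smooth g) (hgc : HasCompactSupport g)
    (i : Fin 3) : ∫ x, f x * pd i g x = - ∫ x, pd i f x * g x := by
  have hg' := hasCompactSupport_pd hgc i
  apply integral_mul_fderiv_eq_neg_fderiv_mul_of_integrable
  · exact integrable_of_smooth (f := fun x => pd i f x * g x) (by fun_prop) hgc.mul_left
  · exact integrable_of_smooth (f := fun x => f x * pd i g x) (by fun_prop) hg'.mul_left
  · exact integrable_of_smooth (f := fun x => f x * g x) (by fun_prop) hgc.mul_left
  · exact fun x _ => differentiableAt_of_smooth hf x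
  · exact fun x _ => differentiableAt_of_smooth hg x

lemma integral_pd_eq_zero {g : E3 → ℝ} (hg : Smooth g) (hgc : HasCompactSupport g)
    (i : Fin 3) : ∫ x, pd i g x = 0 := by
  have h := integral_mul_pd (f := fun _ => 1) contDiff_const hg hgc i
  simpa [pd] using h

end Calculus

section Resolvent

open scoped SchwartzMap LineDeriv Laplacian

lemma pd_schwartz (f : 𝓢(E3, ℝ)) (i : Fin 3) :
    pd i f = ⇑(∂_{(EuclideanSpace.single i 1 : E3)} f : 𝓢(E3, ℝ)) := by
  funext x
  rw [SchwartzMap.lineDerivOp_apply_eq_fderiv]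
  rfl

lemma contDiff_schwartz (f : 𝓢(E3, ℝ)) : Smooth f := f.smooth ⊤

lemma integrable_schwartz_mul (f g : 𝓢(E3, ℝ)) : Integrable fun x => f x * g x :=
  (SchwartzMap.pairing (ContinuousLinearMap.mul ℝ ℝ) f g).integrable

/-- Functions on `E3` that are the underlying function of a Schwartz function. -/
def IsSchwartz (f : E3 → ℝ) : Prop := ∃ F : 𝓢(E3, ℝ), ⇑F = f

lemma IsSchwartz.smooth {f : E3 → ℝ} (hf : IsSchwartz f) : Smooth f := by
  obtain ⟨F, rfl⟩ := hf
  exact contDiff_schwartz F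

lemma IsSchwartz.pd {f : E3 → ℝ} (hf : IsSchwartz f) (i : Fin 3) : IsSchwartz (pd i f) := by
  obtain ⟨F, rfl⟩ := hf
  exact ⟨_, (pd_schwartz F i).symm⟩

lemma IsSchwartz.add {f g : E3 → ℝ} (hf : IsSchwartz f) (hg : IsSchwartz g) :
    IsSchwartz fun x => f x + g x := by
  obtain ⟨F, rfl⟩ := hf
  obtain ⟨G, rfl⟩ := hg
  exact ⟨F + G, rfl⟩

lemma IsSchwartz.lap {f : E3 → ℝ} (hf : IsSchwartz f) : IsSchwartz (lap f) := by
  rw [lap_eq]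
  simp only [Fin.sum_univ_three]
  exact (((hf.pd 0).pd 0).add ((hf.pd 1).pd 1)).add ((hf.pd 2).pd 2)

lemma IsSchwartz.integrable_mul {f g : E3 → ℝ} (hf : IsSchwartz f) (hg : IsSchwartz g) :
    Integrable fun x => f x * g x := by
  obtain ⟨F, rfl⟩ := hf
  obtain ⟨G, rfl⟩ := hg
  exact integrable_schwartz_mul F G

lemma IsSchwartz.integrable_sq {f : E3 → ℝ} (hf : IsSchwartz f) :
    Integrable fun x => f x ^ 2 := by
  simpa only [sq] using hf.integrable_mul hf

lemma IsSchwartz.integral_mul_pd {f g : E3 → ℝ} (hf : IsSchwartz f) (hg : IsSchwartz g)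
    (i : Fin 3) : ∫ x, f x * _root_.pd i g x = - ∫ x, _root_.pd i f x * g x := by
  obtain ⟨F, rfl⟩ := hf
  obtain ⟨G, rfl⟩ := hg
  rw [pd_schwartz, pd_schwartz]
  exact SchwartzMap.integral_mul_lineDerivOp_right_eq_neg_left F G _

lemma isSchwartz_of_hasCompactSupport {f : E3 → ℝ} (hf : Smooth f) (h : HasCompactSupport f) :
    IsSchwartz f :=
  ⟨h.toSchwartzMap hf, rfl⟩

/-- The `L²` norms of the Hessian and of the Laplacian agree. -/
lemma IsSchwartz.integral_hessian_sq {f : E3 → ℝ} (hf : IsSchwartz f) :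
    ∫ x, ∑ i, ∑ j, _root_.pd i (_root_.pd j f) x ^ 2 = ∫ x, _root_.lap f x ^ 2 := by
  have hi : ∀ i j, Integrable fun x => _root_.pd i (_root_.pd j f) x ^ 2 :=
    fun i j => ((hf.pd j).pd i).integrable_sq
  have hi' : ∀ i j, Integrable fun x => _root_.pd i (_root_.pd i f) x
      * _root_.pd j (_root_.pd j f) x :=
    fun i j => ((hf.pd i).pd i).integrable_mul ((hf.pd j).pd j)
  have h : ∀ i j, ∫ x, _root_.pd i (_root_.pd j f) x ^ 2
      = ∫ x, _root_.pd i (_root_.pd i f) x * _root_.pd j (_root_.pd j f) x := by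
    intro i j
    have h2 := (hf.pd j).integral_mul_pd ((hf.pd i).pd i) j
    have h3 := ((hf.pd j)).integral_mul_pd (((hf.pd j).pd i)) i
    have e : _root_.pd i (_root_.pd i (_root_.pd j f))
        = _root_.pd j (_root_.pd i (_root_.pd i f)) := by
      rw [pd_comm hf.smooth i j, pd_comm (hf.pd i).smooth i j]
    rw [e, h2] at h3
    simp only [sq]
    rw [← neg_inj, ← h3]
    simp only [mul_comm]
  rw [integral_finsetSum _ fun i _ => integrable_finsetSum _ fun j _ => hi i j]
  simp_rw [integral_finsetSum _ fun j _ => hi _ j, h]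
  simp_rw [← integral_finsetSum _ fun j _ => hi' _ j]
  rw [← integral_finsetSum _ fun i _ => integrable_finsetSum _ fun j _ => hi' i j]
  refine integral_congr_ae (Eventually.of_forall fun x => ?_)
  simp only [lap_eq, sq, Finset.sum_mul_sum]

lemma IsSchwartz.integral_mul_lap {f : E3 → ℝ} (hf : IsSchwartz f) :
    ∫ x, f x * _root_.lap f x = - ∫ x, ∑ i, _root_.pd i f x ^ 2 := by
  have hi : ∀ i, Integrable fun x => _root_.pd i f x ^ 2 := fun i => (hf.pd i).integrable_sq
  simp only [lap_eq, Finset.mul_sum]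
  rw [integral_finsetSum _ fun i _ => hf.integrable_mul ((hf.pd i).pd i),
    integral_finsetSum _ fun i _ => hi i, ← Finset.sum_neg_distrib]
  refine Finset.sum_congr rfl fun i _ => ?_
  rw [hf.integral_mul_pd (hf.pd i)]
  simp only [sq]

/-- Energy identity for the resolvent equation. -/
lemma IsSchwartz.energy {f : E3 → ℝ} (hf : IsSchwartz f) (c : ℝ) :
    ∫ x, (c * f x - _root_.lap f x) ^ 2 = c ^ 2 * (∫ x, f x ^ 2)
      + 2 * c * (∫ x, ∑ i, _root_.pd i f x ^ 2)
      + ∫ x, ∑ i, ∑ j, _root_.pd i (_root_.pd j f) x ^ 2 := by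
  rw [hf.integral_hessian_sq]
  have h := hf.integral_mul_lap
  have e : (fun x => (c * f x - _root_.lap f x) ^ 2)
      = fun x => (c ^ 2 * f x ^ 2 + (-(2 * c)) * (f x * _root_.lap f x))
        + _root_.lap f x ^ 2 := by
    funext x; ring
  have i1 : Integrable fun x => c ^ 2 * f x ^ 2 := hf.integrable_sq.const_mul _
  have i2 : Integrable fun x => (-(2 * c)) * (f x * _root_.lap f x) :=
    (hf.integrable_mul hf.lap).const_mul _
  have i3 : Integrable fun x => c ^ 2 * f x ^ 2 + (-(2 * c)) * (f x * _root_.lap f x) := i1.add i2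
  rw [e, integral_add i3 hf.lap.integrable_sq, integral_add i1 i2, integral_const_mul, integral_const_mul, h]
  ring

lemma exists_resolvent_complex (H : 𝓢(E3, ℂ)) :
    ∃ Q : 𝓢(E3, ℂ), Q - ((2 * π) ^ 2)⁻¹ • (Δ Q) = H := by
  set m : E3 → ℝ := fun x => (1 + ‖x‖ ^ 2) ^ (-1 : ℝ) with hm
  have hm' : m.HasTemperateGrowth := by rw [hm]; fun_prop
  have hn : (fun x : E3 => ‖x‖ ^ 2).HasTemperateGrowth := by fun_prop
  refine ⟨SchwartzMap.fourierMultiplierCLM ℂ m H, ?_⟩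
  rw [SchwartzMap.laplacian_eq_fourierMultiplierCLM,
    SchwartzMap.fourierMultiplierCLM_fourierMultiplierCLM_apply hn hm']
  have hprod : (fun x : E3 => ‖x‖ ^ 2) * m = fun x => 1 - m x := by
    funext x
    have : (1 + ‖x‖ ^ 2) ≠ 0 := by positivity
    simp only [Pi.mul_apply, hm, Real.rpow_neg_one]
    field_simp
    ring
  have h1 : SchwartzMap.fourierMultiplierCLM ℂ (fun x => 1 - m x) H
      = H - SchwartzMap.fourierMultiplierCLM ℂ m H := by
    have h2 : (fun x => 1 - m x) = (fun _ : E3 => (1 : ℝ)) - m := rfl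
    have h4 : SchwartzMap.fourierMultiplierCLM ℂ (fun x => 1 - m x) H
        = SchwartzMap.fourierMultiplierCLM ℂ (fun _ : E3 => (1 : ℝ)) H
          - SchwartzMap.fourierMultiplierCLM ℂ m H := by
      simp only [SchwartzMap.fourierMultiplierCLM, ContinuousLinearMap.comp_apply]
      rw [h2, SchwartzMap.smulLeftCLM_sub (by fun_prop) hm', sub_apply, map_sub]
    rw [h4]
    simp
  have h4 : (2 * π) ^ 2 ≠ 0 := by positivity
  rw [hprod, h1, smul_smul]
  have h5 : ((2 * π) ^ 2)⁻¹ * -(2 * π) ^ 2 = -1 := by field_simp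
  rw [h5]
  simp

lemma exists_resolvent {g : E3 → ℝ} (hg : IsSchwartz g) :
    ∃ q : E3 → ℝ, IsSchwartz q ∧ ∀ x, (2 * π) ^ 2 * q x - lap q x = g x := by
  obtain ⟨G, rfl⟩ := hg
  obtain ⟨Q, hQ⟩ := exists_resolvent_complex (G.postcompCLM Complex.ofRealCLM)
  have hre : ∀ (A : 𝓢(E3, ℂ)) i, pd i (A.postcompCLM Complex.reCLM)
      = ⇑((∂_{(EuclideanSpace.single i 1 : E3)} A : 𝓢(E3, ℂ)).postcompCLM Complex.reCLM) := by
    intro A i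
    funext x
    rw [SchwartzMap.postcompCLM_apply, SchwartzMap.lineDerivOp_apply_eq_fderiv]
    have h := Complex.reCLM.hasFDerivAt.comp x (A.differentiable x).hasFDerivAt
    unfold pd
    have h' : fderiv ℝ (⇑(A.postcompCLM Complex.reCLM)) x = _ := h.fderiv
    rw [h']
    rfl
  have hlap : ∀ x, lap (Q.postcompCLM Complex.reCLM) x = (Δ Q x).re := by
    intro x
    rw [SchwartzMap.laplacian_eq_sum (EuclideanSpace.basisFun (Fin 3) ℝ)]
    simp only [lap_eq, hre, sum_apply, Complex.re_sum]
    simp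
  refine ⟨fun x => ((2 * π) ^ 2)⁻¹ * (Q x).re, ⟨((2 * π) ^ 2)⁻¹ • Q.postcompCLM Complex.reCLM, rfl⟩,
    fun x => ?_⟩
  have hs : Smooth fun x => (Q x).re := contDiff_schwartz (Q.postcompCLM Complex.reCLM)
  have e : lap (fun x => ((2 * π) ^ 2)⁻¹ * (Q x).re) x = ((2 * π) ^ 2)⁻¹ * (Δ Q x).re := by
    rw [← hlap]
    simp only [lap_eq, pd_const_mul hs]
    simp only [pd_const_mul (contDiff_pd hs _), Finset.mul_sum]
    rfl
  have h := congrArg (fun A : 𝓢(E3, ℂ) => (A x).re) hQ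
  simp only [sub_apply, smul_apply, Complex.sub_re, Complex.real_smul,
    Complex.re_ofReal_mul] at h
  rw [e]
  have h4 : (2 * π) ^ 2 ≠ 0 := by positivity
  have h6 : (G.postcompCLM Complex.ofRealCLM x).re = G x := by simp
  rw [h6] at h
  rw [← h, mul_inv_cancel_left₀ h4]

end Resolvent

section Corrector

lemma abs_sum_three_le {f : Fin 3 → ℝ} {M : ℝ} (h : ∀ k, |f k| ≤ M) : |∑ k, f k| ≤ 3 * M := by
  refine (Finset.abs_sum_le_sum_abs _ _).trans ?_
  refine (Finset.sum_le_sum fun k _ => h k).trans ?_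
  simp

lemma abs_mul_le_mul {a b K M : ℝ} (ha : |a| ≤ K) (hb : |b| ≤ M) : |a * b| ≤ K * M := by
  rw [abs_mul]
  exact mul_le_mul ha hb (abs_nonneg _) ((abs_nonneg _).trans ha)

lemma exists_uniform_bound {ι : Type*} [Fintype ι] {f : ι → E3 → ℝ} (hf : ∀ i, Smooth (f i))
    (hc : ∀ i, HasCompactSupport (f i)) : ∃ K : ℝ, 1 ≤ K ∧ ∀ i x, |f i x| ≤ K := by
  choose K hK using fun i => (hc i).exists_bound_of_continuous (hf i).continuous
  have hs : 0 ≤ ∑ i, |K i| := Finset.sum_nonneg fun i _ => abs_nonneg _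
  refine ⟨1 + ∑ i, |K i|, by linarith, fun i x => ?_⟩
  have h1 := hK i x
  rw [Real.norm_eq_abs] at h1
  have h2 := Finset.single_le_sum (f := fun i => |K i|) (fun i _ => abs_nonneg (K i))
    (Finset.mem_univ i)
  have h3 := le_abs_self (K i)
  linarith

/-- Square of the second order jet of a function. -/
def jetSq (q : E3 → ℝ) (x : E3) : ℝ :=
  q x ^ 2 + (∑ i, pd i q x ^ 2) + ∑ i, ∑ j, pd i (pd j q) x ^ 2

lemma abs_le_sqrt_jetSq (q : E3 → ℝ) (x : E3) :
    |q x| ≤ √(jetSq q x) ∧ (∀ i, |pd i q x| ≤ √(jetSq q x))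
      ∧ ∀ i j, |pd i (pd j q) x| ≤ √(jetSq q x) := by
  have h0 : 0 ≤ q x ^ 2 := sq_nonneg _
  have h1 : ∀ i ∈ Finset.univ, 0 ≤ pd i q x ^ 2 := fun i _ => sq_nonneg _
  have h2 : ∀ i, ∀ j ∈ Finset.univ, 0 ≤ pd i (pd j q) x ^ 2 := fun i j _ => sq_nonneg _
  have h3 : ∀ i ∈ Finset.univ, 0 ≤ ∑ j, pd i (pd j q) x ^ 2 :=
    fun i _ => Finset.sum_nonneg (h2 i)
  have s1 := Finset.sum_nonneg h1
  have s2 := Finset.sum_nonneg h3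
  refine ⟨Real.abs_le_sqrt ?_, fun i => Real.abs_le_sqrt ?_, fun i j => Real.abs_le_sqrt ?_⟩
  · unfold jetSq; linarith
  · have := Finset.single_le_sum h1 (Finset.mem_univ i)
    unfold jetSq; linarith
  · have := Finset.single_le_sum (h2 i) (Finset.mem_univ j)
    have := Finset.single_le_sum h3 (Finset.mem_univ i)
    unfold jetSq; linarith

lemma jetSq_nonneg (q : E3 → ℝ) (x : E3) : 0 ≤ jetSq q x := by
  unfold jetSq; positivity

lemma IsSchwartz.integrable_jetSq {q : E3 → ℝ} (hq : IsSchwartz q) : Integrable (jetSq q) := by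
  unfold jetSq
  exact (hq.integrable_sq.add (integrable_finsetSum _ fun i _ => (hq.pd i).integrable_sq)).add
    (integrable_finsetSum _ fun i _ => integrable_finsetSum _ fun j _ =>
      ((hq.pd j).pd i).integrable_sq)

lemma IsSchwartz.integral_jetSq_le {q : E3 → ℝ} (hq : IsSchwartz q) {c : ℝ} (hc : 1 ≤ c) :
    ∫ x, jetSq q x ≤ ∫ x, (c * q x - _root_.lap q x) ^ 2 := by
  rw [hq.energy c]
  unfold jetSq
  have i1 := hq.integrable_sq
  have i2 : Integrable fun x => ∑ i, _root_.pd i q x ^ 2 :=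
    integrable_finsetSum _ fun i _ => (hq.pd i).integrable_sq
  have i3 : Integrable fun x => ∑ i, ∑ j, _root_.pd i (_root_.pd j q) x ^ 2 :=
    integrable_finsetSum _ fun i _ => integrable_finsetSum _ fun j _ =>
      ((hq.pd j).pd i).integrable_sq
  have i4 : Integrable fun x => q x ^ 2 + ∑ i, _root_.pd i q x ^ 2 := i1.add i2
  rw [integral_add i4 i3, integral_add i1 i2]
  have n1 : 0 ≤ ∫ x, q x ^ 2 := integral_nonneg fun x => sq_nonneg _
  have n2 : 0 ≤ ∫ x, ∑ i, _root_.pd i q x ^ 2 := integral_nonneg fun x => by positivity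
  have : 1 ≤ c ^ 2 := by nlinarith
  nlinarith

/-- Local solvability of `Δ Q = - g` up to a remainder controlled with its derivatives in `L²`. -/
lemma exists_corrector_unit : ∃ C : ℝ, 0 < C ∧ ∀ g : E3 → ℝ, Smooth g →
    tsupport g ⊆ closedBall 0 (3 / 2) → ∃ Q : E3 → ℝ, Smooth Q ∧ tsupport Q ⊆ closedBall 0 2 ∧
      (∫ x, ∑ i, pd i (fun y => lap Q y + g y) x ^ 2) ≤ C * ∫ x, g x ^ 2 ∧
      (∫ x, lap (fun y => lap Q y + g y) x ^ 2) ≤ C * ∫ x, g x ^ 2 := by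
  let χb : ContDiffBump (0 : E3) := ⟨7 / 4, 2, by norm_num, by norm_num⟩
  obtain ⟨χ, hχdef⟩ : ∃ χ : E3 → ℝ, χ = χb := ⟨_, rfl⟩
  have hχ : Smooth χ := hχdef ▸ χb.contDiff
  have hχt : tsupport χ = closedBall 0 2 := by rw [hχdef, χb.tsupport_eq]
  have hχc : HasCompactSupport χ := hχdef ▸ χb.hasCompactSupport
  have hχ1 : ∀ x, ‖x‖ < 7 / 4 → χ =ᶠ[𝓝 x] fun _ => (1 : ℝ) := by
    intro x hx
    rw [hχdef]
    exact χb.eventuallyEq_one_of_mem_ball (by simpa using hx)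
  obtain ⟨K0, hK0, b0⟩ := exists_uniform_bound (f := fun _ : Unit => χ) (fun _ => hχ) fun _ => hχc
  obtain ⟨K1, hK1, b1⟩ := exists_uniform_bound (f := fun i => pd i χ)
    (fun i => by fun_prop) fun i => hasCompactSupport_pd hχc i
  obtain ⟨K2, hK2, b2⟩ := exists_uniform_bound (f := fun i : Fin 3 × Fin 3 => pd i.1 (pd i.2 χ))
    (fun i => by fun_prop) fun i => hasCompactSupport_pd (hasCompactSupport_pd hχc _) _
  obtain ⟨K3, hK3, b3⟩ := exists_uniform_bound (f := fun _ : Unit => lap χ)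
    (fun i => by fun_prop) fun i => hasCompactSupport_lap hχc
  obtain ⟨K4, hK4, b4⟩ := exists_uniform_bound (f := fun i => pd i (lap χ))
    (fun i => by fun_prop) fun i => hasCompactSupport_pd (hasCompactSupport_lap hχc) i
  obtain ⟨K5, hK5, b5⟩ := exists_uniform_bound (f := fun _ : Unit => lap (lap χ))
    (fun i => by fun_prop) fun i => hasCompactSupport_lap (hasCompactSupport_lap hχc)
  obtain ⟨K, hK⟩ : ∃ K, K = K0 + K1 + K2 + K3 + K4 + K5 := ⟨_, rfl⟩
  have c0 : ∀ x, |χ x| ≤ K := fun x => (b0 () x).trans (by linarith)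
  have c1 : ∀ i x, |pd i χ x| ≤ K := fun i x => (b1 i x).trans (by linarith)
  have c2 : ∀ i j x, |pd i (pd j χ) x| ≤ K := fun i j x => (b2 (i, j) x).trans (by linarith)
  have c3 : ∀ x, |lap χ x| ≤ K := fun x => (b3 () x).trans (by linarith)
  have c4 : ∀ i x, |pd i (lap χ) x| ≤ K := fun i x => (b4 i x).trans (by linarith)
  have c5 : ∀ x, |lap (lap χ) x| ≤ K := fun x => (b5 () x).trans (by linarith)
  have hK' : 1 ≤ K := by linarith
  obtain ⟨c, hc⟩ : ∃ c : ℝ, c = (2 * π) ^ 2 := ⟨_, rfl⟩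
  have hc1 : 1 ≤ c := by
    have := Real.pi_gt_three
    rw [hc]
    nlinarith
  obtain ⟨A, hA⟩ : ∃ A : ℝ, A = 10 * c * K + 42 * K + 6 * c * K + 100 * K := ⟨_, rfl⟩
  have hcK : 1 ≤ c * K := by nlinarith
  have hApos : 0 < A := by nlinarith
  refine ⟨3 * A ^ 2, by positivity, fun g hg hgs => ?_⟩
  have hgc : HasCompactSupport g := (isCompact_closedBall 0 (3 / 2)).of_isClosed_subset
    (isClosed_tsupport g) hgs
  obtain ⟨q, hqS, hq⟩ := exists_resolvent (isSchwartz_of_hasCompactSupport hg hgc)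
  rw [← hc] at hq
  have hqs := hqS.smooth
  have hout : ∀ x : E3, 7 / 4 ≤ ‖x‖ → g =ᶠ[𝓝 x] fun _ => (0 : ℝ) := by
    intro x hx
    apply notMem_tsupport_iff_eventuallyEq.1
    intro h
    have := hgs h
    simp only [mem_closedBall, dist_zero_right] at this
    linarith
  have hχg : ∀ x, χ x * g x = g x := by
    intro x
    rcases lt_or_ge ‖x‖ (7 / 4) with h | h
    · rw [(hχ1 x h).eq_of_nhds]; ring
    · rw [(hout x h).eq_of_nhds]; ring
  have hdg : ∀ k x, pd k χ x * pd k g x = 0 := by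
    intro k x
    rcases lt_or_ge ‖x‖ (7 / 4) with h | h
    · rw [pd_eq_zero_of_eventuallyEq (hχ1 x h)]; ring
    · rw [pd_eq_zero_of_eventuallyEq (hout x h)]; ring
  have hlapq : lap q = fun x => c * q x - g x := by
    funext x; linarith [hq x]
  have hY : (fun y => lap (fun z => χ z * q z) y + g y)
      = fun y => c * (χ y * q y) + 2 * (∑ k, pd k χ y * pd k q y) + lap χ y * q y := by
    rw [lap_mul hχ hqs, hlapq]
    funext y
    linear_combination -hχg y
  have hlapdq : ∀ k x, pd k χ x * lap (pd k q) x = c * (pd k χ x * pd k q x) := by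
    intro k x
    rw [← pd_lap_comm hqs, hlapq, pd_sub (by fun_prop) hg, pd_const_mul hqs]
    linear_combination -hdg k x
  obtain ⟨β, hβ⟩ : ∃ β : E3 → ℝ, β = fun x => √(jetSq q x) := ⟨_, rfl⟩
  have d0 : ∀ x, |q x| ≤ β x := fun x => hβ ▸ (abs_le_sqrt_jetSq q x).1
  have d1 : ∀ i x, |pd i q x| ≤ β x := fun i x => hβ ▸ (abs_le_sqrt_jetSq q x).2.1 i
  have d2 : ∀ i j x, |pd i (pd j q) x| ≤ β x := fun i j x => hβ ▸ (abs_le_sqrt_jetSq q x).2.2 i j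
  have d3 : ∀ x, |lap q x| ≤ 3 * β x := fun x => abs_sum_three_le fun k => d2 k k x
  have hβ0 : ∀ x, 0 ≤ β x := fun x => hβ ▸ Real.sqrt_nonneg _
  have hβ2 : ∀ x, β x ^ 2 = jetSq q x := fun x => by
    rw [hβ]; exact Real.sq_sqrt (jetSq_nonneg q x)
  have hβi : Integrable (jetSq q) := hqS.integrable_jetSq
  have hβint : ∫ x, jetSq q x ≤ ∫ x, g x ^ 2 := by
    have := hqS.integral_jetSq_le hc1
    simpa only [hq] using this
  have key : ∀ F : E3 → ℝ, (∀ x, F x ≤ 3 * A ^ 2 * jetSq q x) → (∀ x, 0 ≤ F x) →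
      ∫ x, F x ≤ 3 * A ^ 2 * ∫ x, g x ^ 2 := by
    intro F hF hF0
    calc ∫ x, F x ≤ ∫ x, 3 * A ^ 2 * jetSq q x :=
          integral_mono_of_nonneg (Eventually.of_forall hF0) (hβi.const_mul _)
            (Eventually.of_forall hF)
      _ = 3 * A ^ 2 * ∫ x, jetSq q x := integral_const_mul _ _
      _ ≤ _ := by gcongr
  have hKβ : ∀ x, 0 ≤ K * β x := fun x => mul_nonneg (by linarith) (hβ0 x)
  have hcKβ : ∀ x, 0 ≤ c * (K * β x) := fun x => mul_nonneg (by linarith) (hKβ x)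
  have hcabs : |c| ≤ c := (abs_of_nonneg (by linarith)).le
  have h2abs : |(2 : ℝ)| ≤ 2 := by norm_num
  refine ⟨fun z => χ z * q z, by fun_prop, ?_, ?_, ?_⟩
  · rw [← hχt]; exact tsupport_mul_subset_left
  · rw [hY]
    refine key _ (fun x => ?_) fun x => Finset.sum_nonneg fun i _ => sq_nonneg _
    have hi : ∀ i, pd i (fun y => c * (χ y * q y) + 2 * (∑ k, pd k χ y * pd k q y)
        + lap χ y * q y) x ^ 2 ≤ A ^ 2 * jetSq q x := by
      intro i
      rw [pd_add (by fun_prop) (by fun_prop), pd_add (by fun_prop) (by fun_prop),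
        pd_const_mul (by fun_prop), pd_const_mul (by fun_prop), pd_mul hχ hqs,
        pd_mul (by fun_prop) hqs, pd_sum _ fun k => by fun_prop]
      simp only [pd_mul (contDiff_pd hχ _) (contDiff_pd hqs _)]
      have t1 := abs_mul_le_mul hcabs ((abs_add_le _ _).trans (add_le_add
        (abs_mul_le_mul (c0 x) (d1 i x)) (abs_mul_le_mul (c1 i x) (d0 x))))
      have t2 := abs_mul_le_mul h2abs (abs_sum_three_le fun k => (abs_add_le _ _).trans (add_le_add
        (abs_mul_le_mul (c1 k x) (d2 i k x)) (abs_mul_le_mul (c2 i k x) (d1 k x))))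
      have t3 := (abs_add_le _ _).trans (add_le_add
        (abs_mul_le_mul (c3 x) (d1 i x)) (abs_mul_le_mul (c4 i x) (d0 x)))
      rw [← hβ2, ← mul_pow]
      refine sq_le_sq' ?_ ?_
      · have := (neg_le_of_abs_le ((abs_add_three _ _ _).trans (add_le_add (add_le_add t1 t2) t3)))
        rw [hA]
        nlinarith [hKβ x, hcKβ x]
      · have := (le_of_abs_le ((abs_add_three _ _ _).trans (add_le_add (add_le_add t1 t2) t3)))
        rw [hA]
        nlinarith [hKβ x, hcKβ x]
    refine (Finset.sum_le_sum fun i _ => hi i).trans ?_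
    simp
    linarith
  · rw [hY]
    refine key _ (fun x => ?_) fun x => sq_nonneg _
    have e1 : lap (fun y => c * (χ y * q y)) x
        = c * (χ x * lap q x + 2 * (∑ i, pd i χ x * pd i q x) + lap χ x * q x) := by
      rw [← congrFun (lap_mul hχ hqs) x]
      simp only [lap_eq, pd_const_mul (f := fun y => χ y * q y) (by fun_prop)]
      simp only [pd_const_mul (contDiff_pd (f := fun y => χ y * q y) (by fun_prop) _),
        Finset.mul_sum]
    have e2 : lap (fun y => 2 * (∑ k, pd k χ y * pd k q y)) x
        = 2 * ∑ k, (c * (pd k χ x * pd k q x) + 2 * (∑ i, pd i (pd k χ) x * pd i (pd k q) x)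
          + pd k (lap χ) x * pd k q x) := by
      have : ∀ k, lap (fun y => pd k χ y * pd k q y) x = c * (pd k χ x * pd k q x)
          + 2 * (∑ i, pd i (pd k χ) x * pd i (pd k q) x) + pd k (lap χ) x * pd k q x := by
        intro k
        rw [lap_mul (by fun_prop) (by fun_prop)]
        beta_reduce
        rw [hlapdq, pd_lap_comm hχ]
      simp only [Fin.sum_univ_three] at this ⊢
      have s := fun k => contDiff_pd hχ k
      have s' := fun k => contDiff_pd hqs k
      have e : (fun y => 2 * (pd 0 χ y * pd 0 q y + pd 1 χ y * pd 1 q y + pd 2 χ y * pd 2 q y))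
          = fun y => (fun z => (fun z => pd 0 χ z * pd 0 q z + pd 1 χ z * pd 1 q z) z
              + (fun z => pd 2 χ z * pd 2 q z) z) y
            + (fun z => (fun z => pd 0 χ z * pd 0 q z + pd 1 χ z * pd 1 q z) z
              + (fun z => pd 2 χ z * pd 2 q z) z) y := by
        funext y; ring
      rw [e, lap_add (by fun_prop) (by fun_prop), lap_add (by fun_prop) (by fun_prop),
        lap_add (by fun_prop) (by fun_prop)]
      beta_reduce
      rw [this 0, this 1, this 2]
      ring
    rw [lap_add (by fun_prop) (by fun_prop), lap_add (by fun_prop) (by fun_prop)]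
    beta_reduce
    rw [e1, e2, lap_mul (by fun_prop) hqs]
    beta_reduce
    have t1 := abs_mul_le_mul hcabs ((abs_add_three _ _ _).trans (add_le_add (add_le_add
        (abs_mul_le_mul (c0 x) (d3 x))
        (abs_mul_le_mul h2abs (abs_sum_three_le fun i => abs_mul_le_mul (c1 i x) (d1 i x))))
        (abs_mul_le_mul (c3 x) (d0 x))))
    have t2 := abs_mul_le_mul h2abs (abs_sum_three_le fun k => (abs_add_three _ _ _).trans
      (add_le_add (add_le_add
        (abs_mul_le_mul hcabs (abs_mul_le_mul (c1 k x) (d1 k x)))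
        (abs_mul_le_mul h2abs (abs_sum_three_le fun i => abs_mul_le_mul (c2 i k x) (d2 i k x))))
        (abs_mul_le_mul (c4 k x) (d1 k x))))
    have t3 := (abs_add_three _ _ _).trans (add_le_add (add_le_add
        (abs_mul_le_mul (c3 x) (d3 x))
        (abs_mul_le_mul h2abs (abs_sum_three_le fun i => abs_mul_le_mul (c4 i x) (d1 i x))))
        (abs_mul_le_mul (c5 x) (d0 x)))
    have t := (abs_add_three _ _ _).trans (add_le_add (add_le_add t1 t2) t3)
    rw [← hβ2]
    have hsq : ∀ z : ℝ, |z| ≤ A * β x → z ^ 2 ≤ 3 * A ^ 2 * β x ^ 2 := by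
      intro z hz
      have h1 : z ^ 2 ≤ (A * β x) ^ 2 := sq_le_sq' (neg_le_of_abs_le hz) (le_of_abs_le hz)
      nlinarith [sq_nonneg (A * β x)]
    apply hsq
    refine t.trans ?_
    rw [hA]
    nlinarith [hKβ x, hcKβ x]

end Corrector

section ScaledCorrector

lemma tsupport_comp_smul_subset {f : E3 → ℝ} {r s c : ℝ} (hc : 0 < c)
    (hf : tsupport f ⊆ closedBall 0 r) (hs : s = c⁻¹ * r) :
    tsupport (fun y => f (c • y)) ⊆ closedBall 0 s := by
  have h := tsupport_comp_subset_preimage f (f := fun y : E3 => c • y) (by fun_prop)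
  intro x hx
  have h2 := hf (h hx)
  simp only [mem_closedBall, dist_zero_right, norm_smul, Real.norm_eq_abs, abs_of_pos hc] at h2 ⊢
  rw [hs, inv_mul_eq_div, le_div_iff₀ hc]
  linarith

lemma integral_comp_smul_E3 (f : E3 → ℝ) {c : ℝ} (hc : 0 < c) :
    ∫ x, f (c • x) = (c ^ 3)⁻¹ * ∫ x, f x := by
  rw [Measure.integral_comp_smul_of_nonneg volume f c (hR := hc.le)]
  simp

/-- Scaled version of `exists_corrector_unit`. -/
lemma exists_corrector : ∃ C : ℝ, 0 < C ∧ ∀ R : ℝ, 1 ≤ R → ∀ g : E3 → ℝ, Smooth g →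
    tsupport g ⊆ closedBall 0 (3 / 2 * R) → ∃ Q : E3 → ℝ, Smooth Q ∧
      tsupport Q ⊆ closedBall 0 (2 * R) ∧
      (∫ x, ∑ i, pd i (fun y => lap Q y + g y) x ^ 2) ≤ C * (R⁻¹) ^ 2 * ∫ x, g x ^ 2 ∧
      (∫ x, lap (fun y => lap Q y + g y) x ^ 2) ≤ C * (R⁻¹) ^ 2 * ∫ x, g x ^ 2 := by
  obtain ⟨C, hC, h⟩ := exists_corrector_unit
  refine ⟨C, hC, fun R hR g hg hgs => ?_⟩
  have hR0 : 0 < R := by linarith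
  have hRi : 0 < R⁻¹ := inv_pos.2 hR0
  have hRi1 : R⁻¹ ≤ 1 := inv_le_one_of_one_le₀ hR
  have hRR : R * R⁻¹ = 1 := mul_inv_cancel₀ hR0.ne'
  obtain ⟨Q, hQ, hQs, h1, h2⟩ := h (fun y => g (R • y)) (by fun_prop)
    (tsupport_comp_smul_subset hR0 hgs (by field_simp))
  have hg2 : ∫ x, g (R • x) ^ 2 = (R ^ 3)⁻¹ * ∫ x, g x ^ 2 :=
    integral_comp_smul_E3 (fun x => g x ^ 2) hR0
  rw [hg2] at h1 h2
  obtain ⟨Y, hYdef⟩ : ∃ Y, Y = fun y => lap Q y + g (R • y) := ⟨_, rfl⟩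
  have hY : Smooth Y := by rw [hYdef]; fun_prop
  rw [← hYdef] at h1 h2
  have hYR : (fun y => lap (fun x => R ^ 2 * Q (R⁻¹ • x)) y + g y) = fun y => Y (R⁻¹ • y) := by
    have e : (fun x => R ^ 2 * Q (R⁻¹ • x)) = fun x => (fun x => R ^ 2 * Q x) (R⁻¹ • x) := rfl
    rw [e, lap_comp_smul (f := fun x => R ^ 2 * Q x) (by fun_prop)]
    funext y
    have : lap (fun x => R ^ 2 * Q x) = fun x => R ^ 2 * lap Q x := by
      funext x
      simp only [lap_eq, pd_const_mul hQ, pd_const_mul (contDiff_pd hQ _), Finset.mul_sum]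
    rw [this, hYdef]
    simp only [smul_smul, hRR, one_smul, inv_pow]
    field_simp
  refine ⟨fun x => R ^ 2 * Q (R⁻¹ • x), by fun_prop, ?_, ?_, ?_⟩
  · exact tsupport_mul_subset_right.trans
      (tsupport_comp_smul_subset hRi hQs (by rw [inv_inv]; ring))
  · rw [hYR]
    simp only [pd_comp_smul hY, mul_pow, ← Finset.mul_sum]
    rw [integral_const_mul, integral_comp_smul_E3 (fun x => ∑ i, pd i Y x ^ 2) hRi]
    calc _ ≤ R⁻¹ ^ 2 * ((R⁻¹ ^ 3)⁻¹ * (C * ((R ^ 3)⁻¹ * ∫ x, g x ^ 2))) := by gcongr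
      _ = _ := by field_simp
  · rw [hYR, lap_comp_smul hY]
    simp only [mul_pow]
    rw [integral_const_mul, integral_comp_smul_E3 (fun x => lap Y x ^ 2) hRi]
    calc _ ≤ (R⁻¹ ^ 2) ^ 2 * ((R⁻¹ ^ 3)⁻¹ * (C * ((R ^ 3)⁻¹ * ∫ x, g x ^ 2))) := by gcongr
      _ = R⁻¹ ^ 2 * (C * R⁻¹ ^ 2 * ∫ x, g x ^ 2) := by field_simp
      _ ≤ 1 * (C * R⁻¹ ^ 2 * ∫ x, g x ^ 2) := by
        have : 0 ≤ ∫ x, g x ^ 2 := integral_nonneg fun x => sq_nonneg _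
        gcongr
        exact pow_le_one₀ hRi.le hRi1
      _ = _ := by ring

/-- Cutoff functions adapted to the ball of radius `R`. -/
lemma exists_cutoff : ∃ K : ℝ, 1 ≤ K ∧ ∀ R : ℝ, 1 ≤ R → ∃ η : E3 → ℝ, Smooth η ∧
    tsupport η ⊆ closedBall 0 (3 / 2 * R) ∧ (∀ x, ‖x‖ < R → η x = 1) ∧
    (∀ x, |η x| ≤ 1) ∧ (∀ i x, |pd i η x| ≤ K * R⁻¹) ∧
    ∀ i j x, |pd i (pd j η) x| ≤ K * R⁻¹ := by
  let χb : ContDiffBump (0 : E3) := ⟨1, 3 / 2, by norm_num, by norm_num⟩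
  obtain ⟨χ, hχdef⟩ : ∃ χ : E3 → ℝ, χ = χb := ⟨_, rfl⟩
  have hχ : Smooth χ := hχdef ▸ χb.contDiff
  have hχt : tsupport χ = closedBall 0 (3 / 2) := by rw [hχdef, χb.tsupport_eq]
  have hχc : HasCompactSupport χ := hχdef ▸ χb.hasCompactSupport
  obtain ⟨K1, hK1, b1⟩ := exists_uniform_bound (f := fun i => pd i χ)
    (fun i => by fun_prop) fun i => hasCompactSupport_pd hχc i
  obtain ⟨K2, hK2, b2⟩ := exists_uniform_bound (f := fun i : Fin 3 × Fin 3 => pd i.1 (pd i.2 χ))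
    (fun i => by fun_prop) fun i => hasCompactSupport_pd (hasCompactSupport_pd hχc _) _
  refine ⟨K1 + K2, by linarith, fun R hR => ?_⟩
  have hR0 : 0 < R := by linarith
  have hRi : 0 < R⁻¹ := inv_pos.2 hR0
  have hRi1 : R⁻¹ ≤ 1 := inv_le_one_of_one_le₀ hR
  refine ⟨fun x => χ (R⁻¹ • x), by fun_prop,
    tsupport_comp_smul_subset hRi hχt.le (by rw [inv_inv]; ring), fun x hx => ?_, fun x => ?_,
    fun i x => ?_, fun i j x => ?_⟩
  · simp only [hχdef]
    apply χb.one_of_mem_closedBall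
    simp only [mem_closedBall, dist_zero_right, norm_smul, Real.norm_eq_abs, abs_of_pos hRi]
    rw [inv_mul_eq_div]
    exact (div_le_one hR0).2 hx.le
  · simp only [hχdef]
    rw [abs_of_nonneg χb.nonneg]
    exact χb.le_one
  · rw [pd_comp_smul hχ, abs_mul, abs_of_pos hRi, mul_comm]
    have := b1 i (R⁻¹ • x)
    gcongr
    linarith
  · rw [pd_comp_smul hχ, pd_const_mul (f := fun y => pd j χ (R⁻¹ • y)) (by fun_prop),
      pd_comp_smul (contDiff_pd hχ j)]
    beta_reduce
    rw [← mul_assoc, abs_mul, abs_mul, abs_of_pos hRi, mul_comm]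
    have := b2 (i, j) (R⁻¹ • x)
    simp only at this
    have h3 : R⁻¹ * R⁻¹ ≤ R⁻¹ := by nlinarith
    gcongr
    linarith

end ScaledCorrector

section NullIntegrals

/-- Integrable functions with vanishing integral. -/
def NullInt (f : E3 → ℝ) : Prop := Integrable f ∧ ∫ x, f x = 0

lemma NullInt.add {f g : E3 → ℝ} (hf : NullInt f) (hg : NullInt g) :
    NullInt fun x => f x + g x :=
  ⟨hf.1.add hg.1, by rw [integral_add hf.1 hg.1, hf.2, hg.2, add_zero]⟩

lemma NullInt.sub {f g : E3 → ℝ} (hf : NullInt f) (hg : NullInt g) :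
    NullInt fun x => f x - g x :=
  ⟨hf.1.sub hg.1, by rw [integral_sub hf.1 hg.1, hf.2, hg.2, sub_zero]⟩

lemma NullInt.const_mul {f : E3 → ℝ} (hf : NullInt f) (c : ℝ) : NullInt fun x => c * f x :=
  ⟨hf.1.const_mul c, by rw [integral_const_mul, hf.2, mul_zero]⟩

lemma nullInt_sum {f : Fin 3 → E3 → ℝ} (hf : ∀ k, NullInt (f k)) :
    NullInt fun x => ∑ k, f k x :=
  ⟨integrable_finsetSum _ fun k _ => (hf k).1, by
    rw [integral_finsetSum _ fun k _ => (hf k).1]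
    exact Finset.sum_eq_zero fun k _ => (hf k).2⟩

lemma NullInt.congr {f g : E3 → ℝ} (hf : NullInt f) (h : ∀ x, f x = g x) : NullInt g :=
  (funext h : f = g) ▸ hf

lemma nullInt_pd {g : E3 → ℝ} (hg : Smooth g) (hgc : HasCompactSupport g) (i : Fin 3) :
    NullInt (pd i g) :=
  ⟨integrable_of_smooth (contDiff_pd hg i) (hasCompactSupport_pd hgc i),
    integral_pd_eq_zero hg hgc i⟩

variable {φ : E3 → ℝ} (hφ : Smooth φ) (hφc : HasCompactSupport φ)

include hφ hφc

lemma nullInt_mul_lap {f : E3 → ℝ} (hf : Smooth f) :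
    NullInt fun x => φ x * (f x * lap f x) + φ x * (∑ i, pd i f x ^ 2)
      - 1 / 2 * (lap φ x * f x ^ 2) := by
  have h : ∀ i, NullInt fun x => φ x * (f x * pd i (pd i f) x) + φ x * pd i f x ^ 2
      - 1 / 2 * (pd i (pd i φ) x * f x ^ 2) := by
    intro i
    refine ((nullInt_pd (g := fun x => φ x * (f x * pd i f x)) (by fun_prop)
      hφc.mul_right i).sub ((nullInt_pd (g := fun x => pd i φ x * (f x * f x)) (by fun_prop)
      (hasCompactSupport_pd hφc i).mul_right i).const_mul (1 / 2))).congr fun x => ?_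
    simp (disch := fun_prop) only [pd_mul]
    ring
  refine (nullInt_sum h).congr fun x => ?_
  simp only [lap_eq, Fin.sum_univ_three]
  ring

lemma nullInt_vdiv {v : Fin 3 → E3 → ℝ} (hv : ∀ i, Smooth (v i)) {h : E3 → ℝ} (hh : Smooth h) :
    NullInt fun x => φ x * (∑ i, v i x * pd i h x) + h x * (∑ i, v i x * pd i φ x)
      + φ x * h x * ∑ i, pd i (v i) x := by
  refine (nullInt_sum fun i => nullInt_pd (g := fun x => φ x * (v i x * h x)) (by fun_prop)
      hφc.mul_right i).congr fun x => ?_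
  simp (disch := fun_prop) only [pd_mul]
  simp only [Fin.sum_univ_three]
  ring

lemma nullInt_vdiv_of_div_eq_zero {v : Fin 3 → E3 → ℝ} (hv : ∀ i, Smooth (v i))
    (hd : ∀ x, ∑ i, pd i (v i) x = 0) {h : E3 → ℝ} (hh : Smooth h) :
    NullInt fun x => φ x * (∑ i, v i x * pd i h x) + h x * (∑ i, v i x * pd i φ x) :=
  (nullInt_vdiv hφ hφc hv hh).congr fun x => by rw [hd]; ring

lemma nullInt_curl {u w : Fin 3 → E3 → ℝ} (hu : ∀ i, Smooth (u i)) (hw : ∀ i, Smooth (w i)) :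
    NullInt fun x => φ x * (u 0 x * (pd 1 (w 2) x - pd 2 (w 1) x)
        + u 1 x * (pd 2 (w 0) x - pd 0 (w 2) x) + u 2 x * (pd 0 (w 1) x - pd 1 (w 0) x))
      - φ x * (w 0 x * (pd 1 (u 2) x - pd 2 (u 1) x)
        + w 1 x * (pd 2 (u 0) x - pd 0 (u 2) x) + w 2 x * (pd 0 (u 1) x - pd 1 (u 0) x))
      + (pd 0 φ x * (w 1 x * u 2 x - w 2 x * u 1 x) + pd 1 φ x * (w 2 x * u 0 x - w 0 x * u 2 x)
        + pd 2 φ x * (w 0 x * u 1 x - w 1 x * u 0 x)) := by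
  refine (((nullInt_pd (g := fun x => φ x * (w 1 x * u 2 x - w 2 x * u 1 x)) (by fun_prop)
      hφc.mul_right 0).add (nullInt_pd (g := fun x => φ x * (w 2 x * u 0 x - w 0 x * u 2 x))
      (by fun_prop) hφc.mul_right 1)).add (nullInt_pd
      (g := fun x => φ x * (w 0 x * u 1 x - w 1 x * u 0 x)) (by fun_prop)
      hφc.mul_right 2)).congr fun x => ?_
  simp (disch := fun_prop) only [pd_mul, pd_sub]
  ring

lemma nullInt_grad_mul_grad {u : Fin 3 → E3 → ℝ} (hu : ∀ i, Smooth (u i))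
    (hd : ∀ x, ∑ i, pd i (u i) x = 0) :
    NullInt fun x => φ x * (∑ i, ∑ j, pd i (u j) x * pd j (u i) x)
      - ∑ i, ∑ j, pd j (pd i φ) x * (u i x * u j x) := by
  have h1 := nullInt_vdiv hφ hφc (v := fun i x => ∑ j, u j x * pd j (u i) x)
    (fun i => by fun_prop) (h := fun _ => 1) contDiff_const
  have h2 := nullInt_sum fun i => nullInt_vdiv_of_div_eq_zero (contDiff_pd hφ i)
    (hasCompactSupport_pd hφc i) hu hd (hu i)
  have hdd : ∀ j x, ∑ i, pd j (pd i (u i)) x = 0 := by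
    intro j x
    have e : (fun y => ∑ i, pd i (u i) y) = fun _ => 0 := funext hd
    have e2 := congrFun (pd_sum Finset.univ (f := fun i => pd i (u i)) (fun k => by fun_prop) j) x
    rw [e] at e2
    rw [← e2]
    simp [pd]
  refine (h1.sub h2).congr fun x => ?_
  have d0 := hdd 0 x
  have d1 := hdd 1 x
  have d2 := hdd 2 x
  have hc : ∀ i x, pd i (fun _ => (1 : ℝ)) x = 0 := fun i x => by simp [pd]
  simp only [Fin.sum_univ_three] at d0 d1 d2 ⊢
  simp (disch := fun_prop) only [pd_mul, pd_add, hc]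
  rw [pd_comm (hu 0) 0 1, pd_comm (hu 0) 0 2, pd_comm (hu 1) 1 0, pd_comm (hu 1) 1 2,
    pd_comm (hu 2) 2 0, pd_comm (hu 2) 2 1]
  linear_combination φ x * (u 0 x * d0 + u 1 x * d1 + u 2 x * d2)

end NullIntegrals

section Pressure

lemma lap_sub {f g : E3 → ℝ} (hf : Smooth f) (hg : Smooth g) :
    lap (fun y => f y - g y) = fun x => lap f x - lap g x := by
  funext x
  simp only [lap_eq, pd_sub hf hg, pd_sub (contDiff_pd hf _) (contDiff_pd hg _),
    Finset.sum_sub_distrib]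

lemma nullInt_mul_pd {f ψ : E3 → ℝ} (hf : Smooth f) (hψ : Smooth ψ) (hψc : HasCompactSupport ψ)
    (i : Fin 3) : NullInt fun x => f x * pd i ψ x + pd i f x * ψ x := by
  refine (nullInt_pd (g := fun x => f x * ψ x) (by fun_prop) hψc.mul_left i).congr fun x => ?_
  rw [pd_mul hf hψ]

lemma nullInt_lap_symm {f ψ : E3 → ℝ} (hf : Smooth f) (hψ : Smooth ψ)
    (hψc : HasCompactSupport ψ) : NullInt fun x => lap f x * ψ x - f x * lap ψ x := by
  refine (nullInt_sum fun i => (nullInt_mul_pd (contDiff_pd hf i) hψ hψc i).sub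
    (nullInt_mul_pd hf (contDiff_pd hψ i) (hasCompactSupport_pd hψc i) i)).congr fun x => ?_
  simp only [lap_eq, Fin.sum_univ_three]
  ring

lemma lap_sum_pd {Q : Fin 3 → E3 → ℝ} (hQ : ∀ j, Smooth (Q j)) :
    lap (fun x => ∑ k, pd k (Q k) x) = fun x => ∑ k, pd k (lap (Q k)) x := by
  simp only [Fin.sum_univ_three]
  have s := fun k => contDiff_pd (hQ k) k
  rw [lap_add (f := fun x => pd 0 (Q 0) x + pd 1 (Q 1) x) (by fun_prop) (by fun_prop),
    lap_add (by fun_prop) (by fun_prop), pd_lap_comm (hQ 0), pd_lap_comm (hQ 1),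
    pd_lap_comm (hQ 2)]

lemma hasCompactSupport_sum_pd {Q : Fin 3 → E3 → ℝ} (hQc : ∀ j, HasCompactSupport (Q j)) :
    HasCompactSupport fun x => ∑ k, pd k (Q k) x := by
  simp only [Fin.sum_univ_three]
  have h := fun i => hasCompactSupport_pd (hQc i) i
  exact ((h 0).add (h 1)).add (h 2)

variable {u w b : Fin 3 → E3 → ℝ} {P : E3 → ℝ} (hu : ∀ j, Smooth (u j)) (hw : ∀ j, Smooth (w j))
  (hb : ∀ j, Smooth (b j)) (hP : Smooth P)
  (hdu : ∀ x, ∑ i, pd i (u i) x = 0) (hdb : ∀ x, ∑ i, pd i (b i) x = 0)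
  (m0 : ∀ x, -(lap (u 0) x) + (∑ i, u i x * pd i (u 0) x) + pd 0 P x
    = (pd 1 (w 2) x - pd 2 (w 1) x) + ∑ i, b i x * pd i (b 0) x)
  (m1 : ∀ x, -(lap (u 1) x) + (∑ i, u i x * pd i (u 1) x) + pd 1 P x
    = (pd 2 (w 0) x - pd 0 (w 2) x) + ∑ i, b i x * pd i (b 1) x)
  (m2 : ∀ x, -(lap (u 2) x) + (∑ i, u i x * pd i (u 2) x) + pd 2 P x
    = (pd 0 (w 1) x - pd 1 (w 0) x) + ∑ i, b i x * pd i (b 2) x)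

include hu hw hb hdu hdb m0 m1 m2

/-- The weak form of the momentum equation. -/
lemma nullInt_momentum {ψ : Fin 3 → E3 → ℝ} (hψ : ∀ j, Smooth (ψ j))
    (hψc : ∀ j, HasCompactSupport (ψ j)) :
    NullInt fun x => (∑ j, pd j P x * ψ j x) - (∑ j, u j x * lap (ψ j) x)
      - (∑ j, ∑ i, (u i x * u j x - b i x * b j x) * pd i (ψ j) x)
      - (w 0 x * (pd 1 (ψ 2) x - pd 2 (ψ 1) x) + w 1 x * (pd 2 (ψ 0) x - pd 0 (ψ 2) x)
        + w 2 x * (pd 0 (ψ 1) x - pd 1 (ψ 0) x)) := by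
  have hc := fun i j k => nullInt_mul_pd (hw i) (hψ j) (hψc j) k
  have h1 := nullInt_sum fun j => ((nullInt_lap_symm (hu j) (hψ j) (hψc j)).sub
    (nullInt_vdiv_of_div_eq_zero (hψ j) (hψc j) hu hdu (hu j))).add
    (nullInt_vdiv_of_div_eq_zero (hψ j) (hψc j) hb hdb (hb j))
  refine (h1.sub (((hc 0 2 1).sub (hc 0 1 2)).add (((hc 1 0 2).sub (hc 1 2 0)).add
    ((hc 2 1 0).sub (hc 2 0 1))))).congr fun x => ?_
  have e0 := m0 x
  have e1 := m1 x
  have e2 := m2 x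
  simp only [Fin.sum_univ_three] at e0 e1 e2 ⊢
  linear_combination -ψ 0 x * e0 - ψ 1 x * e1 - ψ 2 x * e2

include hP

/-- The work of the pressure gradient against `φ u`, expressed without the pressure. -/
lemma nullInt_pressure {φ : E3 → ℝ} {Q Y : Fin 3 → E3 → ℝ} {D : E3 → ℝ}
    (hQ : ∀ j, Smooth (Q j)) (hQc : ∀ j, HasCompactSupport (Q j))
    (hY : ∀ j, Smooth (Y j)) (hYc : ∀ j, HasCompactSupport (Y j))
    (hD : D = fun x => ∑ k, pd k (Q k) x)
    (hφu : ∀ j x, φ x * u j x = Y j x - lap (Q j) x) :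
    NullInt fun x => (∑ j, φ x * u j x * pd j P x) - (∑ j, u j x * lap (Y j) x)
      - (∑ j, ∑ i, (u i x * u j x - b i x * b j x) * pd i (Y j) x)
      + (∑ j, ∑ i, (u i x * u j x - b i x * b j x) * pd i (pd j D) x)
      - (w 0 x * (pd 1 (Y 2) x - pd 2 (Y 1) x) + w 1 x * (pd 2 (Y 0) x - pd 0 (Y 2) x)
        + w 2 x * (pd 0 (Y 1) x - pd 1 (Y 0) x)) := by
  have hDs : Smooth D := by rw [hD]; fun_prop
  have hDc : HasCompactSupport D := hD ▸ hasCompactSupport_sum_pd hQc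
  have hlapD : ∀ x, lap D x = ∑ j, pd j (lap (Q j)) x := congrFun (hD ▸ lap_sum_pd hQ)
  have n1 := nullInt_momentum hu hw hb hdu hdb m0 m1 m2 (ψ := fun j x => Y j x - pd j D x)
    (fun j => by fun_prop) (fun j => (hYc j).sub (hasCompactSupport_pd hDc j))
  have n2 := nullInt_sum fun j => nullInt_mul_pd hP (ψ := fun x => pd j D x - lap (Q j) x)
    (by fun_prop) ((hasCompactSupport_pd hDc j).sub (hasCompactSupport_lap (hQc j))) j
  have n3 := nullInt_vdiv_of_div_eq_zero (contDiff_lap hDs) (hasCompactSupport_lap hDc) hu hdu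
    (h := fun _ => 1) contDiff_const
  refine ((n1.add n2).sub n3).congr fun x => ?_
  have hc : ∀ i x, pd i (fun _ => (1 : ℝ)) x = 0 := fun i x => by simp [pd]
  have hl := hlapD x
  have hl2 : lap D x = pd 0 (pd 0 D) x + pd 1 (pd 1 D) x + pd 2 (pd 2 D) x := by
    simp only [lap_eq, Fin.sum_univ_three]
  have f0 := hφu 0 x
  have f1 := hφu 1 x
  have f2 := hφu 2 x
  have hlp : ∀ j, lap (fun x => Y j x - pd j D x) = fun x => lap (Y j) x - pd j (lap D) x := by
    intro j
    rw [lap_sub (hY j) (contDiff_pd hDs j), pd_lap_comm hDs]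
  simp (disch := fun_prop) only [pd_sub, hc, hlp]
  simp only [Fin.sum_univ_three] at hl ⊢
  rw [pd_comm hDs 1 0, pd_comm hDs 2 0, pd_comm hDs 2 1]
  linear_combination P x * hl - P x * hl2 - pd 0 P x * f0 - pd 1 P x * f1 - pd 2 P x * f2

end Pressure

section PressureBound

lemma mul_le_add_sq {R : ℝ} (hR : 0 < R) (x y : ℝ) : x * y ≤ R⁻¹ * x ^ 2 + R * y ^ 2 := by
  have h1 : R⁻¹ * (x - R * y) ^ 2 = R⁻¹ * x ^ 2 - 2 * (x * y) + R * y ^ 2 := by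
    field_simp
    ring
  have h2 : 0 ≤ R⁻¹ * (x - R * y) ^ 2 := by positivity
  have h3 : 0 ≤ R⁻¹ * x ^ 2 := by positivity
  have h4 : 0 ≤ R * y ^ 2 := by positivity
  linarith

lemma integral_le_setIntegral {F G : E3 → ℝ} {r : ℝ} (hF : Integrable F) (hG : Continuous G)
    (h1 : ∀ x ∈ closedBall (0 : E3) r, F x ≤ G x) (h2 : ∀ x ∉ closedBall (0 : E3) r, F x ≤ 0) :
    ∫ x, F x ≤ ∫ x in closedBall 0 r, G x := by
  rw [← integral_indicator measurableSet_closedBall]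
  refine integral_mono hF ?_ fun x => ?_
  · exact (integrable_indicator_iff measurableSet_closedBall).2
      (hG.continuousOn.integrableOn_compact (isCompact_closedBall _ _))
  · by_cases hx : x ∈ closedBall (0 : E3) r
    · rw [Set.indicator_of_mem hx]; exact h1 x hx
    · rw [Set.indicator_of_notMem hx]; exact h2 x hx

lemma hasCompactSupport_of_tsupport_subset {f : E3 → ℝ} {r : ℝ}
    (h : tsupport f ⊆ closedBall 0 r) : HasCompactSupport f :=
  (isCompact_closedBall 0 r).of_isClosed_subset (isClosed_tsupport f) h

/-- Sum of the squares of the components of three vector fields. -/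
def sqSum (u w b : Fin 3 → E3 → ℝ) (x : E3) : ℝ :=
  (∑ j, u j x ^ 2) + (∑ j, b j x ^ 2) + ∑ j, w j x ^ 2

lemma flux_sq_le {M a a' c c' : ℝ} (ha : |a| ≤ M) (hc : |c| ≤ M) :
    (a * a' - c * c') ^ 2 ≤ 2 * M ^ 2 * (a' ^ 2 + c' ^ 2) := by
  have h1 : a ^ 2 ≤ M ^ 2 := sq_le_sq' (neg_le_of_abs_le ha) (le_of_abs_le ha)
  have h2 : c ^ 2 ≤ M ^ 2 := sq_le_sq' (neg_le_of_abs_le hc) (le_of_abs_le hc)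
  have h3 := mul_le_mul_of_nonneg_right h1 (sq_nonneg a')
  have h4 := mul_le_mul_of_nonneg_right h2 (sq_nonneg c')
  nlinarith [sq_nonneg (a * a' + c * c')]

/-- Absorption of the terms obtained after eliminating the pressure. -/
lemma flux_sum_le {M R : ℝ} (hM : 1 ≤ M) (hR : 0 < R) {u b w L : Fin 3 → ℝ}
    {G H : Fin 3 → Fin 3 → ℝ} (hu : ∀ j, |u j| ≤ M) (hb : ∀ j, |b j| ≤ M) :
    -((∑ j, u j * L j) + (∑ j, ∑ i, (u i * u j - b i * b j) * G i j)
      - (∑ j, ∑ i, (u i * u j - b i * b j) * H i j)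
      + (w 0 * (G 1 2 - G 2 1) + w 1 * (G 2 0 - G 0 2) + w 2 * (G 0 1 - G 1 0)))
    ≤ 2 * R * ((∑ j, L j ^ 2) + (∑ j, ∑ i, G i j ^ 2) + ∑ i, ∑ j, H i j ^ 2)
      + 15 * M ^ 2 * R⁻¹ * ((∑ j, u j ^ 2) + (∑ j, b j ^ 2) + ∑ j, w j ^ 2) := by
  have hRi : 0 < R⁻¹ := inv_pos.2 hR
  have a1 := fun j => mul_le_add_sq hR (-u j) (L j)
  have a2 := fun j i => mul_le_add_sq hR (-(u i * u j - b i * b j)) (G i j)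
  have a3 := fun j i => mul_le_add_sq hR (u i * u j - b i * b j) (H i j)
  have a4 := fun i j k => mul_le_add_sq hR (-w i) (G j k)
  have a5 := fun i j k => mul_le_add_sq hR (w i) (G j k)
  have f := fun j i => mul_le_mul_of_nonneg_left
    (flux_sq_le (a' := u j) (c' := b j) (hu i) (hb i)) hRi.le
  have hM2 : 1 ≤ M ^ 2 := one_le_pow₀ hM
  have nL := fun j => mul_nonneg hR.le (sq_nonneg (L j))
  have nG := fun i j => mul_nonneg hR.le (sq_nonneg (G i j))
  have nH := fun i j => mul_nonneg hR.le (sq_nonneg (H i j))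
  have mono : ∀ y : ℝ, R⁻¹ * y ^ 2 ≤ R⁻¹ * (M ^ 2 * y ^ 2) := fun y => by
    have := mul_le_mul_of_nonneg_right hM2 (sq_nonneg y)
    rw [one_mul] at this
    gcongr
  have nn : ∀ y : ℝ, 0 ≤ R⁻¹ * (M ^ 2 * y ^ 2) := fun y => by positivity
  have s1 : ∑ j, -u j * L j ≤ ∑ j, (R⁻¹ * (M ^ 2 * u j ^ 2) + R * L j ^ 2) :=
    Finset.sum_le_sum fun j _ => (a1 j).trans (by rw [neg_sq]; linarith [mono (u j)])
  have s2 : ∑ j, ∑ i, -(u i * u j - b i * b j) * G i j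
      ≤ ∑ j, ∑ i, (R⁻¹ * (2 * M ^ 2 * (u j ^ 2 + b j ^ 2)) + R * G i j ^ 2) :=
    Finset.sum_le_sum fun j _ => Finset.sum_le_sum fun i _ =>
      (a2 j i).trans (by rw [neg_sq]; linarith [f j i])
  have s3 : ∑ j, ∑ i, (u i * u j - b i * b j) * H i j
      ≤ ∑ j, ∑ i, (R⁻¹ * (2 * M ^ 2 * (u j ^ 2 + b j ^ 2)) + R * H i j ^ 2) :=
    Finset.sum_le_sum fun j _ => Finset.sum_le_sum fun i _ =>
      (a3 j i).trans (by linarith [f j i])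
  simp only [neg_sq] at a4
  simp only [Fin.sum_univ_three] at s1 s2 s3 ⊢
  linarith [a4 0 1 2, a5 0 2 1, a4 1 2 0, a5 1 0 2, a4 2 0 1, a5 2 1 0, mono (w 0), mono (w 1),
    mono (w 2), nn (u 0), nn (u 1), nn (u 2), nn (b 0), nn (b 1), nn (b 2), nn (w 0), nn (w 1),
    nn (w 2), nL 0, nL 1, nL 2, nG 0 0, nG 1 1, nG 2 2, nG 0 1, nG 0 2, nG 1 0, nG 1 2, nG 2 0,
    nG 2 1, nH 0 0, nH 1 1, nH 2 2, nH 0 1, nH 0 2, nH 1 0, nH 1 2, nH 2 0, nH 2 1]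

end PressureBound

section PressureEstimate

lemma div_sq_le {a0 a1 a2 c p0 p1 p2 u0 u1 u2 : ℝ} (h0 : |p0| ≤ c) (h1 : |p1| ≤ c)
    (h2 : |p2| ≤ c) :
    (a0 + a1 + a2 - (p0 * u0 + p1 * u1 + p2 * u2)) ^ 2
      ≤ 6 * (a0 ^ 2 + a1 ^ 2 + a2 ^ 2) + 6 * c ^ 2 * (u0 ^ 2 + u1 ^ 2 + u2 ^ 2) := by
  have hs : ∀ p u : ℝ, |p| ≤ c → (p * u) ^ 2 ≤ c ^ 2 * u ^ 2 := fun p u h => by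
    rw [mul_pow]
    exact mul_le_mul_of_nonneg_right (sq_le_sq' (neg_le_of_abs_le h) (le_of_abs_le h))
      (sq_nonneg u)
  have six : ∀ x1 x2 x3 x4 x5 x6 : ℝ, (x1 + x2 + x3 - (x4 + x5 + x6)) ^ 2
      ≤ 6 * (x1 ^ 2 + x2 ^ 2 + x3 ^ 2) + 6 * (x4 ^ 2 + x5 ^ 2 + x6 ^ 2) := by
    intro x1 x2 x3 x4 x5 x6
    linarith [sq_nonneg (x1 - x2), sq_nonneg (x1 - x3), sq_nonneg (x2 - x3), sq_nonneg (x1 + x4),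
      sq_nonneg (x1 + x5), sq_nonneg (x1 + x6), sq_nonneg (x2 + x4), sq_nonneg (x2 + x5),
      sq_nonneg (x2 + x6), sq_nonneg (x3 + x4), sq_nonneg (x3 + x5), sq_nonneg (x3 + x6),
      sq_nonneg (x4 - x5), sq_nonneg (x4 - x6), sq_nonneg (x5 - x6)]
  have := six a0 a1 a2 (p0 * u0) (p1 * u1) (p2 * u2)
  linarith [hs p0 u0 h0, hs p1 u1 h1, hs p2 u2 h2]

/-- Lower bound for the work of the pressure gradient, uniform in the solution. -/
lemma exists_pressure_bound (k : ℝ) : ∃ C : ℝ, 0 < C ∧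
    ∀ (M R : ℝ), 1 ≤ M → 1 ≤ R → ∀ (u w b : Fin 3 → E3 → ℝ) (P φ : E3 → ℝ),
    (∀ j, Smooth (u j)) → (∀ j, Smooth (w j)) → (∀ j, Smooth (b j)) → Smooth P →
    (∀ x, ∑ i, pd i (u i) x = 0) → (∀ x, ∑ i, pd i (b i) x = 0) →
    (∀ x, -(lap (u 0) x) + (∑ i, u i x * pd i (u 0) x) + pd 0 P x
      = (pd 1 (w 2) x - pd 2 (w 1) x) + ∑ i, b i x * pd i (b 0) x) →
    (∀ x, -(lap (u 1) x) + (∑ i, u i x * pd i (u 1) x) + pd 1 P x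
      = (pd 2 (w 0) x - pd 0 (w 2) x) + ∑ i, b i x * pd i (b 1) x) →
    (∀ x, -(lap (u 2) x) + (∑ i, u i x * pd i (u 2) x) + pd 2 P x
      = (pd 0 (w 1) x - pd 1 (w 0) x) + ∑ i, b i x * pd i (b 2) x) →
    (∀ j x, |u j x| ≤ M) → (∀ j x, |b j x| ≤ M) →
    Smooth φ → tsupport φ ⊆ closedBall 0 (3 / 2 * R) → (∀ x, |φ x| ≤ 1) →
    (∀ i x, |pd i φ x| ≤ k * R⁻¹) →
    -(∫ x, ∑ j, φ x * u j x * pd j P x)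
      ≤ C * M ^ 2 * R⁻¹ * ∫ x in closedBall 0 (2 * R), sqSum u w b x := by
  obtain ⟨C0, hC0, hcorr⟩ := exists_corrector
  refine ⟨2 * (24 * C0 + 6 * k ^ 2) + 15, by positivity, ?_⟩
  intro M R hM hR u w b P φ hu hw hb hP hdu hdb m0 m1 m2 huM hbM hφ hφs hφ1 hφd
  have hR0 : 0 < R := by linarith
  have hRi : 0 < R⁻¹ := inv_pos.2 hR0
  obtain ⟨I, hI⟩ : ∃ I, I = ∫ x in closedBall 0 (2 * R), sqSum u w b x := ⟨_, rfl⟩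
  have hSnn : ∀ x, 0 ≤ sqSum u w b x := fun x => by unfold sqSum; positivity
  have hI0 : 0 ≤ I := hI ▸ integral_nonneg hSnn
  have hSc : Smooth (sqSum u w b) := by unfold sqSum; fun_prop
  have hφc := hasCompactSupport_of_tsupport_subset hφs
  have hball : closedBall (0 : E3) (3 / 2 * R) ⊆ closedBall 0 (2 * R) :=
    closedBall_subset_closedBall (by linarith)
  have hφ0 : ∀ x ∉ closedBall (0 : E3) (2 * R), φ x = 0 := fun x hx =>
    image_eq_zero_of_notMem_tsupport fun h => hx (hball (hφs h))
  have hS : ∀ j x, u j x ^ 2 ≤ sqSum u w b x := by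
    intro j x
    have h1 := Finset.single_le_sum (f := fun j => u j x ^ 2) (fun i _ => sq_nonneg _)
      (Finset.mem_univ j)
    have h2 : 0 ≤ ∑ j, b j x ^ 2 := by positivity
    have h3 : 0 ≤ ∑ j, w j x ^ 2 := by positivity
    unfold sqSum
    linarith
  choose Q hQ hQs hY1 hY2 using fun j => hcorr R hR (fun x => φ x * u j x) (by fun_prop)
    (tsupport_mul_subset_left.trans hφs)
  have hg : ∀ j, ∫ x, (φ x * u j x) ^ 2 ≤ I := by
    intro j
    rw [hI]
    refine integral_le_setIntegral (isSchwartz_of_hasCompactSupport (f := fun x => φ x * u j x)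
      (by fun_prop) hφc.mul_right).integrable_sq hSc.continuous (fun x _ => ?_) fun x hx => ?_
    · have : φ x ^ 2 ≤ 1 := (sq_le_one_iff_abs_le_one _).2 (hφ1 x)
      rw [mul_pow]
      nlinarith [hS j x, sq_nonneg (u j x)]
    · rw [hφ0 x hx]; simp
  obtain ⟨Y, hYdef⟩ : ∃ Y : Fin 3 → E3 → ℝ, Y = fun j x => lap (Q j) x + φ x * u j x := ⟨_, rfl⟩
  have hYe : ∀ j, (fun x => lap (Q j) x + φ x * u j x) = Y j := fun j => by rw [hYdef]
  simp only [hYe] at hY1 hY2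
  have hQc := fun j => hasCompactSupport_of_tsupport_subset (hQs j)
  have hY : ∀ j, Smooth (Y j) := fun j => by rw [← hYe]; fun_prop
  have hYc : ∀ j, HasCompactSupport (Y j) := fun j => by
    rw [← hYe]; exact (hasCompactSupport_lap (hQc j)).add hφc.mul_right
  obtain ⟨D, hD⟩ : ∃ D, D = fun x => ∑ j, pd j (Q j) x := ⟨_, rfl⟩
  have hDs : Smooth D := by rw [hD]; fun_prop
  have hDc : HasCompactSupport D := hD ▸ hasCompactSupport_sum_pd hQc
  have hYz : ∀ j, tsupport (Y j) ⊆ closedBall 0 (2 * R) := by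
    intro j
    rw [← hYe]
    have h1 : tsupport (lap (Q j)) ⊆ closedBall 0 (2 * R) := by
      refine closure_minimal (fun x hx => ?_) isClosed_closedBall
      by_contra hx2
      refine hx ?_
      have h3 : ∀ i, pd i (pd i (Q j)) x = 0 := fun i =>
        image_eq_zero_of_notMem_tsupport fun h => hx2 (hQs j (tsupport_pd_subset _ _
          (tsupport_pd_subset _ _ h)))
      simp only [lap_eq, h3, Finset.sum_const_zero]
    exact (tsupport_add _ _).trans (Set.union_subset h1
      ((tsupport_mul_subset_left.trans hφs).trans hball))
  have hDz : tsupport D ⊆ closedBall 0 (2 * R) := by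
    refine closure_minimal (fun x hx => ?_) isClosed_closedBall
    by_contra hx2
    refine hx ?_
    have h3 : ∀ i, pd i (Q i) x = 0 := fun i =>
      image_eq_zero_of_notMem_tsupport fun h => hx2 (hQs i (tsupport_pd_subset _ _ h))
    simp only [hD, h3, Finset.sum_const_zero]
  have hnull := nullInt_pressure hu hw hb hP hdu hdb m0 m1 m2 hQ hQc hY hYc hD
    (fun j x => by rw [hYdef]; ring)
  have iL : ∀ j, Integrable fun x => lap (Y j) x ^ 2 := fun j =>
    (isSchwartz_of_hasCompactSupport (contDiff_lap (hY j))
      (hasCompactSupport_lap (hYc j))).integrable_sq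
  have iG : ∀ j i, Integrable fun x => pd i (Y j) x ^ 2 := fun j i =>
    (isSchwartz_of_hasCompactSupport (contDiff_pd (hY j) i)
      (hasCompactSupport_pd (hYc j) i)).integrable_sq
  have hDS := isSchwartz_of_hasCompactSupport hDs hDc
  have iH : ∀ i j, Integrable fun x => pd i (pd j D) x ^ 2 := fun i j =>
    ((hDS.pd j).pd i).integrable_sq
  have iL' : Integrable fun x => ∑ j, lap (Y j) x ^ 2 := integrable_finsetSum _ fun j _ => iL j
  have iG1 : ∀ j, Integrable fun x => ∑ i, pd i (Y j) x ^ 2 := fun j =>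
    integrable_finsetSum _ fun i _ => iG j i
  have iG' : Integrable fun x => ∑ j, ∑ i, pd i (Y j) x ^ 2 :=
    integrable_finsetSum _ fun j _ => iG1 j
  have iH' : Integrable fun x => ∑ i, ∑ j, pd i (pd j D) x ^ 2 :=
    integrable_finsetSum _ fun i _ => integrable_finsetSum _ fun j _ => iH i j
  have cR : 0 ≤ C0 * R⁻¹ ^ 2 := by positivity
  have bL : ∫ x, ∑ j, lap (Y j) x ^ 2 ≤ 3 * (C0 * R⁻¹ ^ 2 * I) := by
    rw [integral_finsetSum _ fun j _ => iL j]
    refine (Finset.sum_le_sum fun j _ => (hY2 j).trans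
      (mul_le_mul_of_nonneg_left (hg j) cR)).trans ?_
    simp
  have bG : ∫ x, ∑ j, ∑ i, pd i (Y j) x ^ 2 ≤ 3 * (C0 * R⁻¹ ^ 2 * I) := by
    rw [integral_finsetSum _ fun j _ => iG1 j]
    refine (Finset.sum_le_sum fun j _ => (hY1 j).trans
      (mul_le_mul_of_nonneg_left (hg j) cR)).trans ?_
    simp
  have hlapD : ∀ x, lap D x = (pd 0 (Y 0) x + pd 1 (Y 1) x + pd 2 (Y 2) x)
      - (pd 0 φ x * u 0 x + pd 1 φ x * u 1 x + pd 2 φ x * u 2 x) := by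
    intro x
    have h1 : lap D x = ∑ j, pd j (lap (Q j)) x := congrFun (hD ▸ lap_sum_pd hQ) x
    have h2 : ∀ j, pd j (Y j) x = pd j (lap (Q j)) x + (φ x * pd j (u j) x + pd j φ x * u j x) := by
      intro j
      rw [← hYe]
      simp (disch := fun_prop) only [pd_add, pd_mul]
    have h3 := hdu x
    simp only [Fin.sum_univ_three] at h1 h3
    linear_combination h1 - h2 0 - h2 1 - h2 2 - φ x * h3
  have bH : ∫ x, ∑ i, ∑ j, pd i (pd j D) x ^ 2 ≤ 6 * (3 * (C0 * R⁻¹ ^ 2 * I))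
      + 6 * (k * R⁻¹) ^ 2 * I := by
    rw [hDS.integral_hessian_sq]
    have h1 : ∫ x, (lap D x ^ 2 - 6 * ∑ j, ∑ i, pd i (Y j) x ^ 2)
        ≤ ∫ x in closedBall 0 (2 * R), 6 * (k * R⁻¹) ^ 2 * sqSum u w b x := by
      refine integral_le_setIntegral (hDS.lap.integrable_sq.sub (iG'.const_mul 6))
        (contDiff_const.mul hSc).continuous (fun x _ => ?_) fun x hx => ?_
      · rw [hlapD]
        have h2 := div_sq_le (a0 := pd 0 (Y 0) x) (a1 := pd 1 (Y 1) x) (a2 := pd 2 (Y 2) x)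
          (u0 := u 0 x) (u1 := u 1 x) (u2 := u 2 x) (hφd 0 x) (hφd 1 x) (hφd 2 x)
        have h3 : u 0 x ^ 2 + u 1 x ^ 2 + u 2 x ^ 2 ≤ sqSum u w b x := by
          have h4 : 0 ≤ ∑ j, b j x ^ 2 := by positivity
          have h5 : 0 ≤ ∑ j, w j x ^ 2 := by positivity
          unfold sqSum
          rw [Fin.sum_univ_three]
          linarith
        have h4 := mul_le_mul_of_nonneg_left h3 (by positivity : 0 ≤ 6 * (k * R⁻¹) ^ 2)
        simp only [Fin.sum_univ_three]
        have s := fun j i => sq_nonneg (pd i (Y j) x)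
        linarith [s 0 1, s 0 2, s 1 0, s 1 2, s 2 0, s 2 1]
      · have h2 : lap D x = 0 := by
          have h3 : ∀ i, pd i (pd i D) x = 0 := fun i =>
            image_eq_zero_of_notMem_tsupport fun h => hx (hDz (tsupport_pd_subset _ _
              (tsupport_pd_subset _ _ h)))
          simp only [lap_eq, h3, Finset.sum_const_zero]
        rw [h2]
        have : 0 ≤ ∑ j, ∑ i, pd i (Y j) x ^ 2 := by positivity
        linarith
    rw [integral_sub hDS.lap.integrable_sq (iG'.const_mul 6), integral_const_mul,
      integral_const_mul, ← hI] at h1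
    linarith
  obtain ⟨A, hA⟩ : ∃ A : E3 → ℝ, A = fun x => (∑ j, lap (Y j) x ^ 2)
      + (∑ j, ∑ i, pd i (Y j) x ^ 2) + ∑ i, ∑ j, pd i (pd j D) x ^ 2 := ⟨_, rfl⟩
  have iLG : Integrable fun x => (∑ j, lap (Y j) x ^ 2) + ∑ j, ∑ i, pd i (Y j) x ^ 2 :=
    iL'.add iG'
  have iA : Integrable A := by rw [hA]; exact iLG.add iH'
  have bA : ∫ x, A x ≤ (24 * C0 + 6 * k ^ 2) * R⁻¹ ^ 2 * I := by
    rw [hA]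
    simp only
    rw [integral_add iLG iH', integral_add iL' iG']
    linarith
  have iT : Integrable fun x => ∑ j, φ x * u j x * pd j P x :=
    integrable_finsetSum _ fun j _ => integrable_of_smooth (f := fun x => φ x * u j x * pd j P x)
      (by fun_prop) hφc.mul_right.mul_right
  have hmain := integral_le_setIntegral (r := 2 * R) ((hnull.1.sub iT).sub (iA.const_mul (2 * R)))
    (G := fun x => 15 * M ^ 2 * R⁻¹ * sqSum u w b x) (contDiff_const.mul hSc).continuous
    (fun x _ => ?_) fun x hx => ?_
  · have e := integral_sub (hnull.1.sub iT) (iA.const_mul (2 * R))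
    have e2 := integral_sub hnull.1 iT
    simp only [Pi.sub_apply] at e e2 hmain
    rw [e, e2, hnull.2, integral_const_mul, integral_const_mul, ← hI] at hmain
    have h1 := mul_le_mul_of_nonneg_left bA (by positivity : 0 ≤ 2 * R)
    have h2 : 2 * R * ((24 * C0 + 6 * k ^ 2) * R⁻¹ ^ 2 * I)
        = 2 * (24 * C0 + 6 * k ^ 2) * (1 * (R⁻¹ * I)) := by
      field_simp
    have h3 : 2 * (24 * C0 + 6 * k ^ 2) * (1 * (R⁻¹ * I))
        ≤ 2 * (24 * C0 + 6 * k ^ 2) * (M ^ 2 * (R⁻¹ * I)) := by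
      have : 1 ≤ M ^ 2 := one_le_pow₀ hM
      gcongr
    rw [← hI]
    linarith
  · have h1 := flux_sum_le hM hR0 (u := fun j => u j x) (b := fun j => b j x) (w := fun j => w j x)
      (L := fun j => lap (Y j) x) (G := fun i j => pd i (Y j) x) (H := fun i j => pd i (pd j D) x)
      (fun j => huM j x) (fun j => hbM j x)
    simp only [Pi.sub_apply, hA, sqSum]
    linarith
  · have z0 := hφ0 x hx
    have z1 : ∀ i j, pd i (Y j) x = 0 := fun i j =>
      image_eq_zero_of_notMem_tsupport fun h => hx (hYz j (tsupport_pd_subset _ _ h))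
    have z2 : ∀ j, lap (Y j) x = 0 := fun j => by
      have h3 : ∀ i, pd i (pd i (Y j)) x = 0 := fun i =>
        image_eq_zero_of_notMem_tsupport fun h => hx (hYz j (tsupport_pd_subset _ _
          (tsupport_pd_subset _ _ h)))
      simp only [lap_eq, h3, Finset.sum_const_zero]
    have z3 : ∀ i j, pd i (pd j D) x = 0 := fun i j =>
      image_eq_zero_of_notMem_tsupport fun h => hx (hDz (tsupport_pd_subset _ _
        (tsupport_pd_subset _ _ h)))
    simp [hA, z0, z1, z2, z3]

end PressureEstimate

section Energy

/-- The local energy identity. -/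
lemma nullInt_energy {φ : E3 → ℝ} (hφ : Smooth φ) (hφc : HasCompactSupport φ)
    {u w b : Fin 3 → E3 → ℝ} {P d : E3 → ℝ} (hu : ∀ j, Smooth (u j)) (hw : ∀ j, Smooth (w j))
    (hb : ∀ j, Smooth (b j)) (hd : d = fun x => ∑ i, pd i (w i) x)
    (hdu : ∀ x, ∑ i, pd i (u i) x = 0) (hdb : ∀ x, ∑ i, pd i (b i) x = 0)
    (m0 : ∀ x, -(lap (u 0) x) + (∑ i, u i x * pd i (u 0) x) + pd 0 P x
      = (pd 1 (w 2) x - pd 2 (w 1) x) + ∑ i, b i x * pd i (b 0) x)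
    (m1 : ∀ x, -(lap (u 1) x) + (∑ i, u i x * pd i (u 1) x) + pd 1 P x
      = (pd 2 (w 0) x - pd 0 (w 2) x) + ∑ i, b i x * pd i (b 1) x)
    (m2 : ∀ x, -(lap (u 2) x) + (∑ i, u i x * pd i (u 2) x) + pd 2 P x
      = (pd 0 (w 1) x - pd 1 (w 0) x) + ∑ i, b i x * pd i (b 2) x)
    (w0 : ∀ x, -(lap (w 0) x) + (∑ i, u i x * pd i (w 0) x)
      = pd 0 d x + (pd 1 (u 2) x - pd 2 (u 1) x) - 2 * w 0 x)
    (w1 : ∀ x, -(lap (w 1) x) + (∑ i, u i x * pd i (w 1) x)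
      = pd 1 d x + (pd 2 (u 0) x - pd 0 (u 2) x) - 2 * w 1 x)
    (w2 : ∀ x, -(lap (w 2) x) + (∑ i, u i x * pd i (w 2) x)
      = pd 2 d x + (pd 0 (u 1) x - pd 1 (u 0) x) - 2 * w 2 x)
    (hbe : ∀ x j, -(lap (b j) x) + (∑ i, u i x * pd i (b j) x) = ∑ i, b i x * pd i (u j) x) :
    NullInt fun x => φ x * ((∑ j, ∑ i, pd i (u j) x ^ 2) + (∑ j, ∑ i, pd i (b j) x ^ 2)
        + (∑ j, ∑ i, pd i (w j) x ^ 2) + d x ^ 2 + 2 * ∑ j, w j x ^ 2)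
      + (∑ j, φ x * u j x * pd j P x)
      - 1 / 2 * (lap φ x * sqSum u w b x)
      - 1 / 2 * (sqSum u w b x * ∑ i, u i x * pd i φ x)
      + (∑ j, u j x * b j x) * (∑ i, b i x * pd i φ x)
      - 2 * (φ x * (w 0 x * (pd 1 (u 2) x - pd 2 (u 1) x)
        + w 1 x * (pd 2 (u 0) x - pd 0 (u 2) x) + w 2 x * (pd 0 (u 1) x - pd 1 (u 0) x)))
      + (pd 0 φ x * (w 1 x * u 2 x - w 2 x * u 1 x) + pd 1 φ x * (w 2 x * u 0 x - w 0 x * u 2 x)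
        + pd 2 φ x * (w 0 x * u 1 x - w 1 x * u 0 x))
      + d x * ∑ i, w i x * pd i φ x := by
  have hds : Smooth d := by rw [hd]; fun_prop
  have hdx : ∀ x, d x = ∑ i, pd i (w i) x := congrFun hd
  have sq := fun (f : E3 → ℝ) (hf : Smooth f) =>
    (nullInt_mul_lap hφ hφc hf).sub ((nullInt_vdiv_of_div_eq_zero hφ hφc hu hdu
      (h := fun x => f x * f x) (by fun_prop)).const_mul (1 / 2))
  have h1 := nullInt_sum fun j => (((sq (u j) (hu j)).add (sq (b j) (hb j))).add
    (sq (w j) (hw j))).add (nullInt_vdiv_of_div_eq_zero hφ hφc hb hdb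
      (h := fun x => u j x * b j x) (by fun_prop))
  refine ((h1.add (nullInt_vdiv hφ hφc hw hds)).add
    (nullInt_curl hφ hφc hu hw)).congr fun x => ?_
  have e0 := m0 x
  have e1 := m1 x
  have e2 := m2 x
  have f0 := w0 x
  have f1 := w1 x
  have f2 := w2 x
  have g0 := hbe x 0
  have g1 := hbe x 1
  have g2 := hbe x 2
  have hdx' := hdx x
  simp (disch := fun_prop) only [pd_mul]
  rw [← hdx']
  simp only [Fin.sum_univ_three, sqSum] at e0 e1 e2 f0 f1 f2 g0 g1 g2 ⊢
  linear_combination -φ x * (u 0 x * e0 + u 1 x * e1 + u 2 x * e2 + w 0 x * f0 + w 1 x * f1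
    + w 2 x * f2 + b 0 x * g0 + b 1 x * g1 + b 2 x * g2)

lemma mul_mul_le {p c : ℝ} (hp : |p| ≤ c) (x y : ℝ) : p * (x * y) ≤ c / 2 * (x ^ 2 + y ^ 2) := by
  have h1 : |x * y| ≤ (x ^ 2 + y ^ 2) / 2 :=
    abs_le.2 ⟨by nlinarith [sq_nonneg (x + y)], by nlinarith [sq_nonneg (x - y)]⟩
  have h2 := le_of_abs_le (abs_mul_le_mul hp h1)
  linarith

lemma energy_remainder_le {M c κ : ℝ} (hM : 1 ≤ M) {u b w p e : Fin 3 → ℝ}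
    {q : Fin 3 → Fin 3 → ℝ} (hu : ∀ j, |u j| ≤ M) (hb : ∀ j, |b j| ≤ M) (hp : ∀ j, |p j| ≤ c)
    (hq : ∀ i j, |q i j| ≤ c) (he : ∀ j, |e j| ≤ κ) :
    1 / 2 * ((∑ i, q i i) * ((∑ j, u j ^ 2) + (∑ j, b j ^ 2) + ∑ j, w j ^ 2))
      + 1 / 2 * (((∑ j, u j ^ 2) + (∑ j, b j ^ 2) + ∑ j, w j ^ 2) * ∑ i, u i * p i)
      - (∑ j, u j * b j) * (∑ i, b i * p i)
      - (p 0 * (w 1 * u 2 - w 2 * u 1) + p 1 * (w 2 * u 0 - w 0 * u 2)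
        + p 2 * (w 0 * u 1 - w 1 * u 0))
      - 1 / 2 * (∑ i, ∑ j, q j i * (u i * u j)) + (∑ i, w i * e i) ^ 2
    ≤ (7 * M * c + 3 * κ ^ 2) * ((∑ j, u j ^ 2) + (∑ j, b j ^ 2) + ∑ j, w j ^ 2) := by
  have hc : 0 ≤ c := (abs_nonneg _).trans (hp 0)
  obtain ⟨Su, hSu⟩ : ∃ S, S = ∑ j, u j ^ 2 := ⟨_, rfl⟩
  obtain ⟨Sb, hSb⟩ : ∃ S, S = ∑ j, b j ^ 2 := ⟨_, rfl⟩
  obtain ⟨Sw, hSw⟩ : ∃ S, S = ∑ j, w j ^ 2 := ⟨_, rfl⟩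
  have nu : 0 ≤ Su := hSu ▸ by positivity
  have nb : 0 ≤ Sb := hSb ▸ by positivity
  have nw : 0 ≤ Sw := hSw ▸ by positivity
  rw [← hSu, ← hSb, ← hSw]
  have habs : |Su + Sb + Sw| ≤ Su + Sb + Sw := (abs_of_nonneg (by positivity)).le
  have r1 := le_of_abs_le (abs_mul_le_mul (abs_sum_three_le fun i => hq i i) habs)
  have r2 := le_of_abs_le (abs_mul_le_mul habs
    (abs_sum_three_le fun i => abs_mul_le_mul (hu i) (hp i)))
  have hub : |∑ j, u j * b j| ≤ (Su + Sb + Sw) / 2 := by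
    rw [hSu, hSb]
    simp only [Fin.sum_univ_three] at hSu hSb ⊢
    have t := fun j => two_mul_le_add_sq (u j) (b j)
    have t' := fun j => two_mul_le_add_sq (-u j) (b j)
    simp only [neg_sq] at t'
    exact abs_le.2 ⟨by linarith [t' 0, t' 1, t' 2], by linarith [t 0, t 1, t 2]⟩
  have r3 := neg_le_of_abs_le (abs_mul_le_mul hub
    (abs_sum_three_le fun i => abs_mul_le_mul (hb i) (hp i)))
  have r4 : -(p 0 * (w 1 * u 2 - w 2 * u 1) + p 1 * (w 2 * u 0 - w 0 * u 2)
        + p 2 * (w 0 * u 1 - w 1 * u 0)) ≤ c * (Su + Sw) := by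
    have hp' : ∀ j, |-p j| ≤ c := fun j => by rw [abs_neg]; exact hp j
    have t := fun j x y => mul_mul_le (hp j) x y
    have t' := fun j x y => mul_mul_le (hp' j) x y
    simp only [Fin.sum_univ_three] at hSu hSw
    rw [hSu, hSw]
    linarith [t' 0 (w 1) (u 2), t 0 (w 2) (u 1), t' 1 (w 2) (u 0), t 1 (w 0) (u 2),
      t' 2 (w 0) (u 1), t 2 (w 1) (u 0)]
  have r5 : -(∑ i, ∑ j, q j i * (u i * u j)) ≤ 3 * c * Su := by
    have hq' : ∀ i j, |-q i j| ≤ c := fun i j => by rw [abs_neg]; exact hq i j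
    have t := fun i j => mul_mul_le (hq' j i) (u i) (u j)
    simp only [Fin.sum_univ_three] at hSu ⊢
    rw [hSu]
    linarith [t 0 0, t 0 1, t 0 2, t 1 0, t 1 1, t 1 2, t 2 0, t 2 1, t 2 2]
  have r6 : (∑ i, w i * e i) ^ 2 ≤ 3 * κ ^ 2 * Sw := by
    have t : ∀ j, (w j * e j) ^ 2 ≤ w j ^ 2 * κ ^ 2 := fun j => by
      rw [mul_pow]
      exact mul_le_mul_of_nonneg_left (sq_le_sq' (neg_le_of_abs_le (he j)) (le_of_abs_le (he j)))
        (sq_nonneg _)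
    simp only [Fin.sum_univ_three] at hSw ⊢
    rw [hSw]
    linarith [t 0, t 1, t 2, sq_nonneg (w 0 * e 0 - w 1 * e 1),
      sq_nonneg (w 0 * e 0 - w 2 * e 2), sq_nonneg (w 1 * e 1 - w 2 * e 2)]
  have x1 : c * (Su + Sb + Sw) ≤ M * c * (Su + Sb + Sw) := by
    have : c ≤ M * c := by nlinarith
    gcongr
  have x2 : 0 ≤ c * Sb := by positivity
  have x3 : 0 ≤ c * Sw := by positivity
  have x4 : 0 ≤ κ ^ 2 * (Su + Sb) := by positivity
  linarith

end Energy

section Dirichlet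

lemma curl_mul_le {w : Fin 3 → ℝ} {A : Fin 3 → Fin 3 → ℝ} :
    2 * (w 0 * (A 1 2 - A 2 1) + w 1 * (A 2 0 - A 0 2) + w 2 * (A 0 1 - A 1 0))
      ≤ 2 * (∑ j, w j ^ 2) + 1 / 2 * ((∑ j, ∑ i, A i j ^ 2) - ∑ i, ∑ j, A i j * A j i) := by
  simp only [Fin.sum_univ_three]
  nlinarith [sq_nonneg (2 * w 0 - (A 1 2 - A 2 1)), sq_nonneg (2 * w 1 - (A 2 0 - A 0 2)),
    sq_nonneg (2 * w 2 - (A 0 1 - A 1 0))]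

lemma energy_density_le {η T dw S B : ℝ} {u w b e p : Fin 3 → ℝ} {q A : Fin 3 → Fin 3 → ℝ}
    {Nb Nw : ℝ} (hp : ∀ i, p i = 2 * (η * e i)) (hNb : 0 ≤ Nb) (hNw : 0 ≤ Nw)
    (hrem : 1 / 2 * ((∑ i, q i i) * S) + 1 / 2 * (S * ∑ i, u i * p i)
      - (∑ j, u j * b j) * (∑ i, b i * p i)
      - (p 0 * (w 1 * u 2 - w 2 * u 1) + p 1 * (w 2 * u 0 - w 0 * u 2)
        + p 2 * (w 0 * u 1 - w 1 * u 0))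
      - 1 / 2 * (∑ i, ∑ j, q j i * (u i * u j)) + (∑ i, w i * e i) ^ 2 ≤ B) :
    1 / 2 * (η * η * ((∑ j, ∑ i, A i j ^ 2) + Nb + Nw)) + T
      - (η * η * ((∑ j, ∑ i, A i j ^ 2) + Nb + Nw + dw ^ 2 + 2 * ∑ j, w j ^ 2) + T
        - 1 / 2 * ((∑ i, q i i) * S) - 1 / 2 * (S * ∑ i, u i * p i)
        + (∑ j, u j * b j) * (∑ i, b i * p i)
        - 2 * (η * η * (w 0 * (A 1 2 - A 2 1) + w 1 * (A 2 0 - A 0 2) + w 2 * (A 0 1 - A 1 0)))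
        + (p 0 * (w 1 * u 2 - w 2 * u 1) + p 1 * (w 2 * u 0 - w 0 * u 2)
          + p 2 * (w 0 * u 1 - w 1 * u 0))
        + dw * ∑ i, w i * p i)
      + 1 / 2 * (η * η * (∑ i, ∑ j, A i j * A j i) - ∑ i, ∑ j, q j i * (u i * u j)) ≤ B := by
  have hη : 0 ≤ η * η := mul_self_nonneg η
  have h1 := mul_le_mul_of_nonneg_left (curl_mul_le (w := w) (A := A)) hη
  have h2 := mul_nonneg hη hNb
  have h3 := mul_nonneg hη hNw
  have h4 : ∑ i, w i * p i = 2 * (η * ∑ i, w i * e i) := by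
    simp only [hp, Fin.sum_univ_three]; ring
  have h5 := sq_nonneg (η * dw + ∑ i, w i * e i)
  rw [h4]
  linarith

lemma integral_add_sub_of_nullInt {f g h : E3 → ℝ} (hf : Integrable f) (hg : Integrable g)
    (hh : NullInt h) : ∫ x, (f x + g x - h x) = (∫ x, f x) + ∫ x, g x := by
  rw [← integral_add hf hg, ← sub_zero (∫ x, f x + g x), ← hh.2]
  exact integral_sub (hf.add hg) hh.1

lemma exists_sq_cutoff : ∃ K : ℝ, 1 ≤ K ∧ ∀ R : ℝ, 1 ≤ R → ∃ η φ : E3 → ℝ, Smooth φ ∧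
    tsupport φ ⊆ closedBall 0 (3 / 2 * R) ∧ (∀ i x, |pd i η x| ≤ K * R⁻¹) ∧
    (∀ x, φ x = η x * η x) ∧ (∀ i x, pd i φ x = 2 * (η x * pd i η x)) ∧
    (∀ x, ‖x‖ < R → η x = 1) ∧ (∀ x, |φ x| ≤ 1) ∧ (∀ i x, |pd i φ x| ≤ 4 * K ^ 2 * R⁻¹) ∧
    ∀ i j x, |pd i (pd j φ) x| ≤ 4 * K ^ 2 * R⁻¹ := by
  obtain ⟨K, hK1, hcut⟩ := exists_cutoff
  refine ⟨K, hK1, fun R hR => ?_⟩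
  obtain ⟨η, hη, hηs, hη1, hηle, hηd, hηdd⟩ := hcut R hR
  have hR0 : 0 < R := by linarith
  have hRi : 0 < R⁻¹ := inv_pos.2 hR0
  have hRi1 : R⁻¹ ≤ 1 := inv_le_one_of_one_le₀ hR
  have hK2 : K ≤ K ^ 2 := by nlinarith
  obtain ⟨φ, hφdef⟩ : ∃ φ : E3 → ℝ, φ = fun x => η x * η x := ⟨_, rfl⟩
  have hφx : ∀ x, φ x = η x * η x := fun x => by rw [hφdef]
  have hφ : Smooth φ := by rw [hφdef]; fun_prop
  have hφs : tsupport φ ⊆ closedBall 0 (3 / 2 * R) := by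
    rw [hφdef]
    exact (tsupport_mul_subset_left (f := η) (g := η)).trans hηs
  have hφp : ∀ i x, pd i φ x = 2 * (η x * pd i η x) := by
    intro i x
    rw [hφdef, pd_mul hη hη]
    ring
  have hφ1 : ∀ x, |φ x| ≤ 1 := fun x => by
    rw [hφx]; simpa using abs_mul_le_mul (hηle x) (hηle x)
  have hφd : ∀ i x, |pd i φ x| ≤ 4 * K ^ 2 * R⁻¹ := fun i x => by
    rw [hφp, abs_mul, abs_two]
    have := abs_mul_le_mul (hηle x) (hηd i x)
    nlinarith
  have hφdd : ∀ i j x, |pd i (pd j φ) x| ≤ 4 * K ^ 2 * R⁻¹ := fun i j x => by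
    have e : pd j φ = fun x => 2 * (η x * pd j η x) := funext (hφp j)
    rw [e, pd_const_mul (by fun_prop), pd_mul hη (by fun_prop)]
    have h1 := abs_mul_le_mul (hηle x) (hηdd i j x)
    have h2 := abs_mul_le_mul (hηd i x) (hηd j x)
    have h3 := abs_add_le (η x * pd i (pd j η) x) (pd i η x * pd j η x)
    have h4 : K * R⁻¹ * (K * R⁻¹) ≤ K ^ 2 * R⁻¹ := by
      have : K ^ 2 * R⁻¹ * R⁻¹ ≤ K ^ 2 * R⁻¹ * 1 := by gcongr
      nlinarith
    have h5 : K * R⁻¹ ≤ K ^ 2 * R⁻¹ := by gcongr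
    rw [abs_mul, abs_two]
    linarith
  exact ⟨η, φ, hφ, hφs, hηd, hφx, hφp, hη1, hφ1, hφd, hφdd⟩

lemma remainder_coeff_le {K M r : ℝ} (hM : 1 ≤ M) (hr : 0 < r) (hr1 : r ≤ 1) :
    7 * M * (4 * K ^ 2 * r) + 3 * (K * r) ^ 2 ≤ 31 * K ^ 2 * M ^ 2 * r := by
  have hM2 : M ≤ M ^ 2 := by nlinarith
  have h1 : K ^ 2 * r * M ≤ K ^ 2 * r * M ^ 2 := by gcongr
  have h2 : K ^ 2 * r * r ≤ K ^ 2 * r * M ^ 2 := by gcongr; linarith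
  nlinarith

/-- The Dirichlet integral over a ball is controlled by the `L²` norms over a larger ball. -/
lemma exists_dirichlet_bound : ∃ C : ℝ, 0 < C ∧
    ∀ (M R : ℝ), 1 ≤ M → 1 ≤ R → ∀ (u w b : Fin 3 → E3 → ℝ) (P d : E3 → ℝ),
    (∀ j, Smooth (u j)) → (∀ j, Smooth (w j)) → (∀ j, Smooth (b j)) → Smooth P →
    (d = fun x => ∑ i, pd i (w i) x) →
    (∀ x, ∑ i, pd i (u i) x = 0) → (∀ x, ∑ i, pd i (b i) x = 0) →
    (∀ x, -(lap (u 0) x) + (∑ i, u i x * pd i (u 0) x) + pd 0 P x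
      = (pd 1 (w 2) x - pd 2 (w 1) x) + ∑ i, b i x * pd i (b 0) x) →
    (∀ x, -(lap (u 1) x) + (∑ i, u i x * pd i (u 1) x) + pd 1 P x
      = (pd 2 (w 0) x - pd 0 (w 2) x) + ∑ i, b i x * pd i (b 1) x) →
    (∀ x, -(lap (u 2) x) + (∑ i, u i x * pd i (u 2) x) + pd 2 P x
      = (pd 0 (w 1) x - pd 1 (w 0) x) + ∑ i, b i x * pd i (b 2) x) →
    (∀ x, -(lap (w 0) x) + (∑ i, u i x * pd i (w 0) x)
      = pd 0 d x + (pd 1 (u 2) x - pd 2 (u 1) x) - 2 * w 0 x) →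
    (∀ x, -(lap (w 1) x) + (∑ i, u i x * pd i (w 1) x)
      = pd 1 d x + (pd 2 (u 0) x - pd 0 (u 2) x) - 2 * w 1 x) →
    (∀ x, -(lap (w 2) x) + (∑ i, u i x * pd i (w 2) x)
      = pd 2 d x + (pd 0 (u 1) x - pd 1 (u 0) x) - 2 * w 2 x) →
    (∀ x j, -(lap (b j) x) + (∑ i, u i x * pd i (b j) x) = ∑ i, b i x * pd i (u j) x) →
    (∀ j x, |u j x| ≤ M) → (∀ j x, |b j x| ≤ M) →
    ∫ x in ball 0 R, ((∑ j, ∑ i, pd i (u j) x ^ 2) + (∑ j, ∑ i, pd i (b j) x ^ 2)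
        + ∑ j, ∑ i, pd i (w j) x ^ 2)
      ≤ C * M ^ 2 * R⁻¹ * ∫ x in closedBall 0 (2 * R), sqSum u w b x := by
  obtain ⟨K, hK1, hcut⟩ := exists_sq_cutoff
  obtain ⟨C, hC, hpress⟩ := exists_pressure_bound (4 * K ^ 2)
  refine ⟨2 * (C + 31 * K ^ 2), by positivity, ?_⟩
  intro M R hM hR u w b P d hu hw hb hP hd hdu hdb m0 m1 m2 w0 w1 w2 hbe huM hbM
  obtain ⟨η, φ, hφ, hφs, hηd, hφx, hφp, hη1, hφ1, hφd, hφdd⟩ := hcut R hR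
  have hφc := hasCompactSupport_of_tsupport_subset hφs
  have hR0 : 0 < R := by linarith
  have hRi : 0 < R⁻¹ := inv_pos.2 hR0
  have hRi1 : R⁻¹ ≤ 1 := inv_le_one_of_one_le₀ hR
  have hball : closedBall (0 : E3) (3 / 2 * R) ⊆ closedBall 0 (2 * R) :=
    closedBall_subset_closedBall (by linarith)
  have hzero : ∀ {f : E3 → ℝ}, tsupport f ⊆ tsupport φ → ∀ x ∉ closedBall (0 : E3) (2 * R),
      f x = 0 := fun hf x hx => image_eq_zero_of_notMem_tsupport fun h => hx (hball (hφs (hf h)))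
  obtain ⟨N, hN⟩ : ∃ N : E3 → ℝ, N = fun x => (∑ j, ∑ i, pd i (u j) x ^ 2)
    + (∑ j, ∑ i, pd i (b j) x ^ 2) + ∑ j, ∑ i, pd i (w j) x ^ 2 := ⟨_, rfl⟩
  have hNs : Smooth N := by rw [hN]; fun_prop
  have hNnn : ∀ x, 0 ≤ N x := fun x => by rw [hN]; positivity
  have hSs : Smooth (sqSum u w b) := by unfold sqSum; fun_prop
  have hSnn : ∀ x, 0 ≤ sqSum u w b x := fun x => by unfold sqSum; positivity
  have hNi : Integrable fun x => φ x * N x :=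
    integrable_of_smooth (by fun_prop) hφc.mul_right
  have hTi : Integrable fun x => ∑ j, φ x * u j x * pd j P x := by
    have : (fun x => ∑ j, φ x * u j x * pd j P x) = fun x => φ x * ∑ j, u j x * pd j P x := by
      funext x; rw [Finset.mul_sum]; exact Finset.sum_congr rfl fun j _ => by ring
    rw [this]
    exact integrable_of_smooth (by fun_prop) hφc.mul_right
  have hZ := nullInt_energy hφ hφc hu hw hb hd hdu hdb m0 m1 m2 w0 w1 w2 hbe
  have hF := nullInt_grad_mul_grad hφ hφc hu hdu
  have hE := hZ.sub (hF.const_mul (1 / 2))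
  have hmain := integral_le_setIntegral (r := 2 * R)
    (G := fun x => 31 * K ^ 2 * M ^ 2 * R⁻¹ * sqSum u w b x)
    (((hNi.const_mul (1 / 2)).add hTi).sub hE.1) (by fun_prop) ?_ ?_
  · replace hmain :=
      (integral_add_sub_of_nullInt (hNi.const_mul (1 / 2)) hTi hE).symm.trans_le hmain
    rw [integral_const_mul, integral_const_mul] at hmain
    have hp := hpress M R hM hR u w b P φ hu hw hb hP hdu hdb m0 m1 m2 huM hbM hφ hφs hφ1 hφd
    have hle : ∫ x in ball 0 R, N x ≤ ∫ x, φ x * N x := by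
      rw [← integral_indicator measurableSet_ball]
      refine integral_mono_of_nonneg (Eventually.of_forall fun x =>
        Set.indicator_nonneg (fun x _ => hNnn x) x) hNi (Eventually.of_forall fun x => ?_)
      by_cases hx : x ∈ ball (0 : E3) R
      · simp only [Set.indicator_of_mem hx, hφx, hη1 x (mem_ball_zero_iff.1 hx), one_mul, le_refl]
      · simp only [Set.indicator_of_notMem hx, hφx]
        exact mul_nonneg (mul_self_nonneg _) (hNnn x)
    rw [hN] at hle hmain
    linarith
  · intro x _
    have hrem := energy_remainder_le hM (u := fun j => u j x) (b := fun j => b j x)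
      (w := fun j => w j x) (p := fun j => pd j φ x) (e := fun j => pd j η x)
      (q := fun i j => pd i (pd j φ) x) (fun j => huM j x) (fun j => hbM j x)
      (fun j => hφd j x) (fun i j => hφdd i j x) (fun j => hηd j x)
    have hden := energy_density_le (η := η x) (T := ∑ j, φ x * u j x * pd j P x) (dw := d x)
      (S := sqSum u w b x) (u := fun j => u j x) (b := fun j => b j x) (w := fun j => w j x)
      (e := fun i => pd i η x) (p := fun i => pd i φ x) (q := fun i j => pd i (pd j φ) x)
      (A := fun i j => pd i (u j) x) (Nb := ∑ j, ∑ i, pd i (b j) x ^ 2)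
      (Nw := ∑ j, ∑ i, pd i (w j) x ^ 2)
      (fun i => hφp i x) (by positivity) (by positivity) hrem
    have hfin := mul_le_mul_of_nonneg_right (remainder_coeff_le (K := K) hM hRi hRi1) (hSnn x)
    replace hfin := hden.trans hfin
    simp only [Pi.add_apply, Pi.sub_apply, hN, lap_eq]
    simp only [← hφx] at hfin
    linarith
  · intro x hx
    have z0 := hzero subset_rfl x hx
    have z1 := fun i => hzero (tsupport_pd_subset φ i) x hx
    have z2 := fun i j => hzero ((tsupport_pd_subset (pd j φ) i).trans (tsupport_pd_subset φ j)) x hx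
    simp [z0, z1, z2, lap_eq]

end Dirichlet

section Holder

lemma setIntegral_closedBall_eq_ball (f : E3 → ℝ) (r : ℝ) :
    ∫ x in closedBall 0 r, f x = ∫ x in ball 0 r, f x := by
  refine setIntegral_congr_set ?_
  refine (ae_eq_of_subset_of_measure_ge ball_subset_closedBall ?_ measurableSet_ball.nullMeasurableSet
    measure_closedBall_lt_top.ne).symm
  rw [Measure.addHaar_closedBall_eq_addHaar_ball]

lemma setIntegral_norm_le_lpnorm {p : ℝ} (hp : 1 ≤ p) {v : E3 → E3} (hv : Continuous v) {r : ℝ}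
    (hr : 0 < r) : ∫ x in ball 0 r, ‖v x‖
      ≤ lpnorm p v (ball3 r) * (volume.real (ball (0 : E3) 1) * r ^ 3) ^ (1 - 1 / p) := by
  have hp0 : 0 < p := by linarith
  have hfin : IsFiniteMeasure (volume.restrict (ball (0 : E3) r)) :=
    isFiniteMeasure_restrict.2 measure_ball_lt_top.ne
  obtain ⟨B, hB⟩ := (isCompact_closedBall (0 : E3) r).exists_bound_of_continuousOn hv.continuousOn
  have hmem : ∀ q : ℝ≥0∞, MemLp v q (volume.restrict (ball (0 : E3) r)) := fun q =>
    MemLp.of_bound hv.aestronglyMeasurable B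
      ((ae_restrict_iff' measurableSet_ball).2
        (Eventually.of_forall fun x hx => hB x (ball_subset_closedBall hx)))
  have h1p : (1 : ℝ≥0∞) ≤ ENNReal.ofReal p := by
    rw [← ENNReal.ofReal_one]; exact ENNReal.ofReal_le_ofReal hp
  have h := eLpNorm_le_eLpNorm_mul_rpow_measure_univ h1p
    (hmem 1).aestronglyMeasurable
  rw [(hmem 1).eLpNorm_eq_integral_rpow_norm one_ne_zero ENNReal.one_ne_top,
    (hmem _).eLpNorm_eq_integral_rpow_norm (by simpa using hp0) ENNReal.ofReal_ne_top,
    Measure.restrict_apply_univ, Measure.addHaar_ball _ _ hr.le] at h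
  have hvol : ENNReal.ofReal (r ^ Module.finrank ℝ E3) * volume (ball (0 : E3) 1)
      = ENNReal.ofReal (volume.real (ball (0 : E3) 1) * r ^ 3) := by
    rw [finrank_euclideanSpace_fin, mul_comm, ENNReal.ofReal_mul (by positivity),
      ofReal_measureReal measure_ball_lt_top.ne]
  rw [hvol] at h
  simp only [ENNReal.toReal_one, rpow_one, inv_one, ENNReal.toReal_ofReal hp0.le] at h
  have he : (0 : ℝ) ≤ 1 - 1 / p := by
    rw [sub_nonneg, div_le_one hp0]; exact hp
  rw [ENNReal.ofReal_rpow_of_nonneg (by positivity) (by simpa using he),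
    ← ENNReal.ofReal_mul (by positivity)] at h
  have h' := (ENNReal.ofReal_le_ofReal_iff (by positivity)).1 h
  simpa [lpnorm, ball3] using h'

lemma inv_mul_rpow_volume {p m R : ℝ} (hp : 0 < p) (hm : 0 ≤ m) (hR : 0 < R) :
    R⁻¹ * (m * (2 * R) ^ 3) ^ (1 - 1 / p) = (8 * m) ^ (1 - 1 / p) * R ^ (2 - 3 / p) := by
  have h1 : m * (2 * R) ^ 3 = 8 * m * R ^ (3 : ℝ) := by
    rw [show (3 : ℝ) = ((3 : ℕ) : ℝ) by norm_num, rpow_natCast]; ring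
  rw [h1, mul_rpow (by positivity) (by positivity), ← rpow_mul hR.le, ← rpow_neg_one,
    mul_left_comm, ← rpow_add hR]
  congr 2
  field_simp
  ring

end Holder

section Components

lemma abs_apply_le_norm (v : E3) (j : Fin 3) : |v j| ≤ ‖v‖ := by
  simpa using PiLp.norm_apply_le v j

lemma sum_sq_le_mul_norm {M : ℝ} {v : E3} (h : ‖v‖ ≤ M) : ∑ j, v j ^ 2 ≤ M * ‖v‖ := by
  rw [← EuclideanSpace.real_norm_sq_eq, sq]
  gcongr

lemma setIntegral_sqSum_le {p M r : ℝ} (hp : 1 ≤ p) (hr : 0 < r) {u w b : E3 → E3}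
    (hu : Continuous u) (hw : Continuous w) (hb : Continuous b) (huM : ∀ x, ‖u x‖ ≤ M)
    (hwM : ∀ x, ‖w x‖ ≤ M) (hbM : ∀ x, ‖b x‖ ≤ M) :
    ∫ x in closedBall 0 r, sqSum (fun j x => u x j) (fun j x => w x j) (fun j x => b x j) x
      ≤ M * (volume.real (ball (0 : E3) 1) * r ^ 3) ^ (1 - 1 / p)
        * (lpnorm p u (ball3 r) + lpnorm p b (ball3 r) + lpnorm p w (ball3 r)) := by
  have hM : 0 ≤ M := (norm_nonneg _).trans (huM 0)
  have hi : ∀ {f : E3 → ℝ}, Continuous f → IntegrableOn f (ball 0 r) := fun hf =>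
    (hf.continuousOn.integrableOn_compact (isCompact_closedBall _ _)).mono_set
      ball_subset_closedBall
  have h : ∫ x in ball 0 r, sqSum (fun j x => u x j) (fun j x => w x j) (fun j x => b x j) x
      ≤ ∫ x in ball 0 r, M * (‖u x‖ + ‖b x‖ + ‖w x‖) := by
    refine setIntegral_mono (hi ?_) (hi (by fun_prop)) fun x => ?_
    · unfold sqSum
      fun_prop
    · have h1 := sum_sq_le_mul_norm (huM x)
      have h2 := sum_sq_le_mul_norm (hbM x)
      have h3 := sum_sq_le_mul_norm (hwM x)
      simp only [sqSum]
      linarith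
  rw [integral_const_mul,
    integral_add (f := fun x => ‖u x‖ + ‖b x‖) (hi (by fun_prop)) (hi hw.norm),
    integral_add (hi hu.norm) (hi hb.norm)] at h
  rw [setIntegral_closedBall_eq_ball]
  refine h.trans ?_
  have h1 := setIntegral_norm_le_lpnorm hp hu hr
  have h2 := setIntegral_norm_le_lpnorm hp hb hr
  have h3 := setIntegral_norm_le_lpnorm hp hw hr
  rw [mul_assoc]
  refine mul_le_mul_of_nonneg_left ?_ hM
  linarith

lemma lpnorm_nonneg (p : ℝ) (v : E3 → E3) (S : Set E3) : 0 ≤ lpnorm p v S :=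
  rpow_nonneg (integral_nonneg fun _ => rpow_nonneg (norm_nonneg _) _) _

end Components

/-- Dirichlet integral estimate for bounded solutions, `p ∈ [1, 3/2)`. -/
theorem dirichlet_estimate_bounded_low_p
    (p : ℝ) (hp1 : 1 ≤ p) (hp2 : p < 3 / 2)
    (Mu Mb Mw : ℝ) :
    ∃ C : ℝ, 0 < C ∧
      ∀ u w b : E3 → E3, ∀ P : E3 → ℝ, IsMMPSolution u w b P →
      (∀ x, ‖u x‖ ≤ Mu) → (∀ x, ‖b x‖ ≤ Mb) → (∀ x, ‖w x‖ ≤ Mw) →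
      ∀ R : ℝ, 1 < R →
        (∫ x in ball3 R, (gradSq u x + gradSq b x + gradSq w x)) ≤
          C * (R ^ (1 - 3 / p) + R ^ (2 - 3 / p)) *
            (lpnorm p u (ball3 (2 * R)) + lpnorm p b (ball3 (2 * R))
              + lpnorm p w (ball3 (2 * R))) := by
  obtain ⟨C, hC, hdir⟩ := exists_dirichlet_bound
  obtain ⟨M, hM⟩ : ∃ M, M = 1 + |Mu| + |Mb| + |Mw| := ⟨_, rfl⟩
  have hM1 : 1 ≤ M := by linarith [abs_nonneg Mu, abs_nonneg Mb, abs_nonneg Mw]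
  have hm : 0 < volume.real (ball (0 : E3) 1) :=
    ENNReal.toReal_pos (measure_ball_pos _ _ one_pos).ne' measure_ball_lt_top.ne
  obtain ⟨D, hD⟩ : ∃ D, D = (8 * volume.real (ball (0 : E3) 1)) ^ (1 - 1 / p) := ⟨_, rfl⟩
  have hD0 : 0 < D := by rw [hD]; positivity
  refine ⟨C * M ^ 3 * D, by positivity, ?_⟩
  intro u w b P hs hu hb hw R hR
  have hR0 : 0 < R := by linarith
  have huM : ∀ x, ‖u x‖ ≤ M := fun x => by
    linarith [hu x, le_abs_self Mu, abs_nonneg Mb, abs_nonneg Mw]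
  have hbM : ∀ x, ‖b x‖ ≤ M := fun x => by
    linarith [hb x, le_abs_self Mb, abs_nonneg Mu, abs_nonneg Mw]
  have hwM : ∀ x, ‖w x‖ ≤ M := fun x => by
    linarith [hw x, le_abs_self Mw, abs_nonneg Mb, abs_nonneg Mu]
  have h := hdir M R hM1 hR.le (fun j x => u x j) (fun j x => w x j) (fun j x => b x j) P
    (fun x => vdiv w x) (fun j => contDiff_euclidean.1 hs.smooth_u j)
    (fun j => contDiff_euclidean.1 hs.smooth_w j) (fun j => contDiff_euclidean.1 hs.smooth_b j)
    hs.smooth_P rfl hs.div_u hs.div_b (fun x => hs.eq_u x 0) (fun x => hs.eq_u x 1)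
    (fun x => hs.eq_u x 2) (fun x => hs.eq_w x 0) (fun x => hs.eq_w x 1) (fun x => hs.eq_w x 2)
    (fun x j => hs.eq_b x j) (fun j x => (abs_apply_le_norm _ _).trans (huM x))
    (fun j x => (abs_apply_le_norm _ _).trans (hbM x))
  obtain ⟨Λ, hΛ⟩ : ∃ Λ, Λ = lpnorm p u (ball3 (2 * R)) + lpnorm p b (ball3 (2 * R))
    + lpnorm p w (ball3 (2 * R)) := ⟨_, rfl⟩
  have hΛ0 : 0 ≤ Λ := by
    rw [hΛ]
    exact add_nonneg (add_nonneg (lpnorm_nonneg _ _ _) (lpnorm_nonneg _ _ _)) (lpnorm_nonneg _ _ _)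
  have h2 := setIntegral_sqSum_le hp1 (show 0 < 2 * R by linarith) hs.smooth_u.continuous
    hs.smooth_w.continuous hs.smooth_b.continuous huM hwM hbM
  rw [← hΛ] at h2 ⊢
  have hvol := inv_mul_rpow_volume (p := p) (by linarith) hm.le hR0
  rw [← hD] at hvol
  calc ∫ x in ball3 R, (gradSq u x + gradSq b x + gradSq w x)
      ≤ C * M ^ 2 * R⁻¹
        * (M * (volume.real (ball (0 : E3) 1) * (2 * R) ^ 3) ^ (1 - 1 / p) * Λ) :=
        h.trans (mul_le_mul_of_nonneg_left h2 (by positivity))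
    _ = C * M ^ 3
        * (R⁻¹ * (volume.real (ball (0 : E3) 1) * (2 * R) ^ 3) ^ (1 - 1 / p)) * Λ := by ring
    _ = C * M ^ 3 * D * R ^ (2 - 3 / p) * Λ := by rw [hvol]; ring
    _ ≤ C * M ^ 3 * D * (R ^ (1 - 3 / p) + R ^ (2 - 3 / p)) * Λ := by
        have : 0 ≤ R ^ (1 - 3 / p) := by positivity
        gcongr
        linarith
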